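/- Let H be one of the graphs house, hammer. Then every (bull, H)-free minimally non-perfectly weight divisible graph is triangle-free. -/

import Mathlib

/-! A minimally non-perfectly weight divisible graph `G` is prime (`MNWD.primeOn`): it has no
homogeneous set, since a homogeneous set could be contracted to a vertex of the appropriate weight,
and perfection survives substitution (`Perf.substitution`, a form of Lovász's replication lemma).
Moreover the non-neighbours of a vertex `v` never induce a perfect graph
(`MNWD.not_perf_nonNbrs`): such a perfect set together with `v` would meet all cliques of maximum
weight. So the non-neighbours of `v` contain a minimal imperfect set `F`. Only the following is
used of it (`Core`): `F` is prime, has no simplicial vertex, and is not bipartite.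

Let `F` be such a core and `v` a vertex outside `F` anticomplete to it. Primeness of `G` and
bull-freeness force that no vertex is complete to `F`, that a vertex with a neighbour anticomplete
to `F` has a stable neighbourhood in `F`, and that some such vertex has a neighbour in `F`
(`Core.exists_attachment`, `Core.not_complete`, `Core.stableNbrs`).

*Hammer.* If `v` lies in a triangle, the whole triangle is anticomplete to `F`. The vertices
anticomplete to `F` that lie in triangles, together with their neighbours, then form a union of
components of `G` (`Core.no_triangle_of_hammer`), contradicting connectedness.

*House.* In a prime set of a (bull, house)-free graph, the vertices with stable neighbourhood
form a union of components (`PrimeOn.stableNbrs_all`). Hence `F` is triangle-free. The trace of any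
vertex on `F` is then everything, stable, or a closed neighbourhood (`Core.trace`); the first is
impossible, and so is the third by primeness of `G` (`Core.no_true_twin`). Thus the edges of `F` lie
in no triangle of `G`, and propagating stability of neighbourhoods once more, now through `G`,
shows that `G` is triangle-free. -/

open SimpleGraph

/-- `H` is isomorphic to an induced subgraph of `G`. -/
def ContainsInduced {α β : Type*} (G : SimpleGraph α) (H : SimpleGraph β) : Prop :=
  ∃ f : β ↪ α, ∀ a b, G.Adj (f a) (f b) ↔ H.Adj a b

/-- `G` is `H`-free: `G` does not contain `H` as an induced subgraph. -/
def IsFree {α β : Type*} (G : SimpleGraph α) (H : SimpleGraph β) : Prop :=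
  ¬ ContainsInduced G H

/-- The clique number of the subgraph of `G` induced on `s`. -/
noncomputable def cliqueNumOn {V : Type*} (G : SimpleGraph V) (s : Set V) : ℕ :=
  sSup {n | ∃ t : Finset V, ↑t ⊆ s ∧ G.IsNClique n t}

/-- The maximum `w`-weight of a clique of `G` contained in `s`. -/
noncomputable def wCliqueNumOn {V : Type*} (G : SimpleGraph V) (w : V → ℕ) (s : Set V) : ℕ :=
  sSup {n | ∃ t : Finset V, ↑t ⊆ s ∧ G.IsClique (↑t : Set V) ∧ ∑ v ∈ t, w v = n}

/-- A graph is perfect if every induced subgraph has chromatic number equal to clique number. -/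
def IsPerfect {V : Type*} (G : SimpleGraph V) : Prop :=
  ∀ s : Set V, (G.induce s).chromaticNumber = (cliqueNumOn G s : ℕ∞)

/-- `G` is perfectly divisible: every (nonempty) induced subgraph `H` of `G` admits a partition
`(A, B)` of its vertex set with `H[A]` perfect and `ω(H[B]) < ω(H)`. -/
def PerfectlyDivisible {V : Type*} (G : SimpleGraph V) : Prop :=
  ∀ s : Set V, s.Nonempty →
    ∃ A B : Set V, A ∪ B = s ∧ A ∩ B = ∅ ∧
      IsPerfect (G.induce A) ∧ cliqueNumOn G B < cliqueNumOn G s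

/-- `G` is perfectly weight divisible: for every positive integer weight function `w` and every
(nonempty) induced subgraph `H` of `G`, there is a partition `(P, W)` of its vertex set with
`H[P]` perfect and the maximum weight of a clique of `H[W]` less than that of `H`. -/
def PerfectlyWeightDivisible {V : Type*} (G : SimpleGraph V) : Prop :=
  ∀ w : V → ℕ, (∀ v, 0 < w v) →
    ∀ s : Set V, s.Nonempty →
      ∃ P W : Set V, P ∪ W = s ∧ P ∩ W = ∅ ∧
        IsPerfect (G.induce P) ∧ wCliqueNumOn G w W < wCliqueNumOn G w s

/-- The bull: a triangle `{0,1,2}` with pendant edges `0-3` and `1-4`. -/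
def bull : SimpleGraph (Fin 5) :=
  SimpleGraph.fromEdgeSet {s(0,1), s(0,2), s(1,2), s(0,3), s(1,4)}

/-- The house: the complement of the path on 5 vertices. -/
def house : SimpleGraph (Fin 5) := (SimpleGraph.pathGraph 5)ᶜ

/-- The hammer: a triangle `{0,1,2}` together with the path `2-3-4`. -/
def hammer : SimpleGraph (Fin 5) :=
  SimpleGraph.fromEdgeSet {s(0,1), s(0,2), s(1,2), s(2,3), s(3,4)}

/-- The diamond: `K₄` minus an edge. -/
def diamond : SimpleGraph (Fin 4) :=
  SimpleGraph.fromEdgeSet {s(0,1), s(0,2), s(0,3), s(1,2), s(1,3)}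

/-- The odd torch built on the cycle `C_k` from a set `S` of cycle vertices: two new adjacent
vertices are added, the first adjacent exactly to `S`, the second to no cycle vertex. -/
def oddTorch (k : ℕ) (S : Set (Fin k)) : SimpleGraph (Fin k ⊕ Fin 2) :=
  SimpleGraph.fromRel (fun a b =>
    match a, b with
    | Sum.inl i, Sum.inl j => (SimpleGraph.cycleGraph k).Adj i j
    | Sum.inl i, Sum.inr u => u = 0 ∧ i ∈ S
    | Sum.inr _, Sum.inl _ => False
    | Sum.inr u, Sum.inr v => u ≠ v)

/-- `G` contains no odd torch as an induced subgraph. -/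
def OddTorchFree {V : Type*} (G : SimpleGraph V) : Prop :=
  ∀ (k : ℕ) (S : Set (Fin k)), 5 ≤ k → Odd k → S.Nonempty →
    (∀ i ∈ S, ∀ j ∈ S, ¬ (SimpleGraph.cycleGraph k).Adj i j) →
    IsFree G (oddTorch k S)

/-- `G` is locally perfect: the neighbourhood of each vertex induces a perfect graph. -/
def LocallyPerfect {V : Type*} (G : SimpleGraph V) : Prop :=
  ∀ v : V, IsPerfect (G.induce (G.neighborSet v))

/-- `N(X)`: vertices outside `X` with a neighbour in `X`. -/
def nbhd {V : Type*} (G : SimpleGraph V) (X : Set V) : Set V :=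
  {u | u ∉ X ∧ ∃ x ∈ X, G.Adj u x}

/-- `M(X) = V(G) \ (X ∪ N(X))`: vertices outside `X` with no neighbour in `X`. -/
def antiNbhd {V : Type*} (G : SimpleGraph V) (X : Set V) : Set V :=
  {u | u ∉ X ∧ ∀ x ∈ X, ¬ G.Adj u x}

/-- Minimally non-perfectly divisible. -/
def MNPD {V : Type*} (G : SimpleGraph V) : Prop :=
  ¬ PerfectlyDivisible G ∧ ∀ s : Set V, s ≠ Set.univ → PerfectlyDivisible (G.induce s)

/-- Minimally non-perfectly weight divisible. -/
def MNWD {V : Type*} (G : SimpleGraph V) : Prop :=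
  ¬ PerfectlyWeightDivisible G ∧ ∀ s : Set V, s ≠ Set.univ → PerfectlyWeightDivisible (G.induce s)

/-! ### Perfection in terms of colourings of subsets -/

/-- `Perf G A`: the subgraph of `G` induced on `A` is perfect, phrased without subtypes: every
`S ⊆ A` all of whose cliques have at most `k` vertices has a proper colouring with `k` colours. -/
def Perf {V : Type*} (G : SimpleGraph V) (A : Set V) : Prop :=
  ∀ S ⊆ A, ∀ k : ℕ, (∀ t : Finset V, (t : Set V) ⊆ S → G.IsClique (t : Set V) → t.card ≤ k) →
    ∃ c : V → ℕ, (∀ v ∈ S, c v < k) ∧ ∀ u ∈ S, ∀ v ∈ S, G.Adj u v → c u ≠ c v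

lemma cliqueNumOn_bdd {V : Type*} [Finite V] (G : SimpleGraph V) (s : Set V) :
    BddAbove {n | ∃ t : Finset V, (t : Set V) ⊆ s ∧ G.IsNClique n t} := by
  have := Fintype.ofFinite V
  refine ⟨Fintype.card V, ?_⟩
  rintro n ⟨t, -, ht⟩
  rw [← ht.card_eq]
  exact Finset.card_le_univ t

lemma cliqueNumOn_mem {V : Type*} [Finite V] (G : SimpleGraph V) (s : Set V) :
    ∃ t : Finset V, ↑t ⊆ s ∧ G.IsNClique (cliqueNumOn G s) t :=
  Nat.sSup_mem (s := {n | ∃ t : Finset V, (t : Set V) ⊆ s ∧ G.IsNClique n t})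
    ⟨0, ∅, by simp, by simp⟩ (cliqueNumOn_bdd G s)

lemma le_cliqueNumOn {V : Type*} [Finite V] (G : SimpleGraph V) (s : Set V) (t : Finset V)
    (h : ↑t ⊆ s) (ht : G.IsClique (t : Set V)) : t.card ≤ cliqueNumOn G s :=
  le_csSup (cliqueNumOn_bdd G s) ⟨t, h, ht, rfl⟩

lemma wCliqueNumOn_bdd {V : Type*} [Finite V] (G : SimpleGraph V) (w : V → ℕ) (s : Set V) :
    BddAbove {n | ∃ t : Finset V, (t : Set V) ⊆ s ∧ G.IsClique (↑t : Set V) ∧ ∑ v ∈ t, w v = n} := by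
  have := Fintype.ofFinite V
  refine ⟨∑ v, w v, ?_⟩
  rintro n ⟨t, -, -, rfl⟩
  exact Finset.sum_le_univ_sum_of_nonneg (by simp)

lemma wCliqueNumOn_mem {V : Type*} [Finite V] (G : SimpleGraph V) (w : V → ℕ) (s : Set V) :
    ∃ t : Finset V, ↑t ⊆ s ∧ G.IsClique (↑t : Set V) ∧ ∑ v ∈ t, w v = wCliqueNumOn G w s :=
  Nat.sSup_mem
    (s := {n | ∃ t : Finset V, (t : Set V) ⊆ s ∧ G.IsClique (↑t : Set V) ∧ ∑ v ∈ t, w v = n})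
    ⟨0, ∅, by simp, by simp, by simp⟩ (wCliqueNumOn_bdd G w s)

lemma le_wCliqueNumOn {V : Type*} [Finite V] (G : SimpleGraph V) (w : V → ℕ) (s : Set V)
    (t : Finset V) (h : ↑t ⊆ s) (ht : G.IsClique (t : Set V)) :
    ∑ v ∈ t, w v ≤ wCliqueNumOn G w s :=
  le_csSup (wCliqueNumOn_bdd G w s) ⟨t, h, ht, rfl⟩

lemma colorable_induce {V : Type*} (G : SimpleGraph V) (s : Set V) (k : ℕ) :
    (G.induce s).Colorable k ↔
      ∃ c : V → ℕ, (∀ v ∈ s, c v < k) ∧ ∀ u ∈ s, ∀ v ∈ s, G.Adj u v → c u ≠ c v := by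
  classical
  constructor
  · rintro ⟨C⟩
    refine ⟨fun v => if h : v ∈ s then (C ⟨v, h⟩ : ℕ) else 0, ?_, ?_⟩
    · intro v hv
      simp [hv]
    · intro u hu v hv huv h
      simp only [hu, hv, dite_true] at h
      exact C.valid (v := ⟨u, hu⟩) (w := ⟨v, hv⟩) huv (Fin.ext h)
  · rintro ⟨c, hc, hadj⟩
    refine ⟨Coloring.mk (fun v : s => (⟨c v, hc v v.2⟩ : Fin k)) ?_⟩
    intro u v huv h
    exact hadj u u.2 v v.2 huv (Fin.mk.inj_iff.mp h)

lemma isPerfect_iff {V : Type*} [Finite V] (G : SimpleGraph V) :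
    IsPerfect G ↔ Perf G Set.univ := by
  constructor
  · intro h S _ k hk
    rw [← colorable_induce, ← chromaticNumber_le_iff_colorable, h S]
    obtain ⟨t, hts, ht⟩ := cliqueNumOn_mem G S
    have := hk t hts ht.isClique
    rw [ht.card_eq] at this
    exact_mod_cast this
  · intro h s
    apply le_antisymm
    · rw [chromaticNumber_le_iff_colorable, colorable_induce]
      exact h s (Set.subset_univ _) _ fun t => le_cliqueNumOn G s t
    · obtain ⟨t, hts, ht⟩ := cliqueNumOn_mem G s
      rw [le_chromaticNumber_iff_colorable]
      intro n hn
      obtain ⟨c, hc, hadj⟩ := (colorable_induce G s n).1 hn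
      rw [← ht.card_eq, ← Finset.card_range n]
      refine Finset.card_le_card_of_injOn c ?_ ?_
      · intro v hv
        simpa using hc v (hts hv)
      · intro u hu v hv huv
        by_contra hne
        exact hadj u (hts hu) v (hts hv) (ht.isClique hu hv hne) huv

/-- Perfection of an induced subgraph does not depend on the ambient type. -/
lemma perf_induce {V : Type*} (G : SimpleGraph V) (s : Set V) (B : Set s) :
    Perf (G.induce s) B ↔ Perf G (Subtype.val '' B) := by
  classical
  constructor
  · intro h S hS k hk
    have hSs : ∀ v ∈ S, v ∈ s := by
      intro v hv
      obtain ⟨x, -, rfl⟩ := hS hv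
      exact x.2
    obtain ⟨c, hc, hadj⟩ := h (Subtype.val ⁻¹' S) (by
      intro x hx
      obtain ⟨y, hy, hxy⟩ := hS hx
      rwa [← Subtype.ext hxy]) k (by
      intro t ht hcl
      rw [← Finset.card_map (Function.Embedding.subtype _)]
      refine hk _ ?_ ?_
      · intro v hv
        simp only [Finset.coe_map, Set.mem_image, Finset.mem_coe] at hv
        obtain ⟨x, hx, rfl⟩ := hv
        exact ht hx
      · intro u hu v hv huv
        simp only [Finset.coe_map, Set.mem_image, Finset.mem_coe] at hu hv
        obtain ⟨x, hx, rfl⟩ := hu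
        obtain ⟨y, hy, rfl⟩ := hv
        exact hcl hx hy (fun h => huv (by rw [h])))
    refine ⟨fun v => if h : v ∈ s then c ⟨v, h⟩ else 0, ?_, ?_⟩
    · intro v hv
      simp only [hSs v hv, dite_true]
      exact hc _ hv
    · intro u hu v hv huv
      simp only [hSs v hv, hSs u hu, dite_true]
      exact hadj _ hu _ hv huv
  · intro h S hS k hk
    obtain ⟨c, hc, hadj⟩ := h (Subtype.val '' S) (Set.image_mono hS) k (by
      intro t ht hcl
      have hts : ∀ v ∈ t, v ∈ s := by
        intro v hv
        obtain ⟨x, -, rfl⟩ := ht hv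
        exact x.2
      have : (t.subtype (· ∈ s)).card = t.card := by
        rw [Finset.card_subtype, Finset.filter_true_of_mem hts]
      rw [← this]
      refine hk _ ?_ ?_
      · intro x hx
        obtain ⟨y, hy, hxy⟩ := ht (by simpa using hx : x.1 ∈ (t : Set V))
        rwa [← Subtype.ext hxy]
      · intro x hx y hy hxy
        exact hcl (by simpa using hx) (by simpa using hy) (fun h => hxy (Subtype.ext h)))
    exact ⟨fun v => c v, fun v hv => hc v ⟨v, hv, rfl⟩, fun u hu v hv huv =>
      hadj u ⟨u, hu, rfl⟩ v ⟨v, hv, rfl⟩ huv⟩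

lemma isPerfect_induce_iff {V : Type*} [Finite V] (G : SimpleGraph V) (A : Set V) :
    IsPerfect (G.induce A) ↔ Perf G A := by
  rw [isPerfect_iff, perf_induce]
  simp

lemma Perf.mono {V : Type*} {G : SimpleGraph V} {A B : Set V} (h : Perf G A) (hBA : B ⊆ A) :
    Perf G B := fun S hS k hk => h S (hS.trans hBA) k hk

/-! ### Replication and substitution -/

/-- Weighted form of Lovász's replication lemma: if `G[A]` is perfect, `h` is supported on `A`
and every clique has `h`-weight at most `k`, then one can assign `h v` of `k` colours to each
vertex `v` so that adjacent vertices receive disjoint sets of colours. -/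
lemma Perf.multicolor {V : Type*} [Fintype V] {G : SimpleGraph V} {A : Set V} (hA : Perf G A) :
    ∀ (n : ℕ) (h : V → ℕ), ∑ v, h v = n → (∀ v, h v ≠ 0 → v ∈ A) → ∀ k : ℕ,
      (∀ t : Finset V, G.IsClique (t : Set V) → ∑ v ∈ t, h v ≤ k) →
      ∃ c : V → Finset ℕ, (∀ v, c v ⊆ Finset.range k) ∧ (∀ v, (c v).card = h v) ∧
        ∀ u v, G.Adj u v → Disjoint (c u) (c v) := by
  classical
  intro n
  induction n using Nat.strong_induction_on with
  | _ n ih =>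
  intro h hn hsupp k hk
  by_cases hbig : ∃ v, 2 ≤ h v
  · obtain ⟨v, hv⟩ := hbig
    -- Colour with one copy of `v` removed, and pick a colour `i` used on `v`.
    set h₁ : V → ℕ := fun u => if u = v then h u - 1 else h u with hh₁
    have h₁le : ∀ u, h₁ u ≤ h u := by intro u; simp only [hh₁]; split_ifs <;> omega
    have h₁lt : ∑ u, h₁ u < n := by
      rw [← hn]
      refine Finset.sum_lt_sum (fun u _ => h₁le u) ⟨v, Finset.mem_univ _, ?_⟩
      simp only [hh₁, if_true]; omega
    obtain ⟨c, hck, hcard, hdis⟩ := ih _ h₁lt h₁ rfl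
      (fun u hu => hsupp u (by have := h₁le u; omega)) k
      (fun t ht => (Finset.sum_le_sum fun u _ => h₁le u).trans (hk t ht))
    have hcv : 0 < (c v).card := by rw [hcard]; simp only [hh₁, if_true]; omega
    obtain ⟨i, hi⟩ := Finset.card_pos.mp hcv
    have hik : i < k := by simpa using hck v hi
    -- The class of `i` is re-coloured by a fresh colour that `v` receives as well; every clique
    -- of maximum weight avoids `v`, hence meets this class outside `v`.
    set h₂ : V → ℕ := fun u => if i ∈ c u ∧ u ≠ v then h₁ u - 1 else h₁ u with hh₂
    have h₂le : ∀ u, h₂ u ≤ h₁ u := by intro u; simp only [hh₂]; split_ifs <;> omega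
    obtain ⟨d, hdk, hdcard, hddis⟩ := ih _
      (lt_of_le_of_lt (Finset.sum_le_sum fun u _ => h₂le u) h₁lt) h₂ rfl
      (fun u hu => hsupp u (by have := h₁le u; have := h₂le u; omega)) (k - 1) (by
        intro t ht
        by_cases hvt : v ∈ t
        · have h3 : ∑ u ∈ t, h₂ u ≤ ∑ u ∈ t, h₁ u := Finset.sum_le_sum fun u _ => h₂le u
          have h4 : ∑ u ∈ t, h₁ u < ∑ u ∈ t, h u := by
            refine Finset.sum_lt_sum (fun u _ => h₁le u) ⟨v, hvt, ?_⟩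
            simp only [hh₁, if_true]; omega
          have := hk t ht
          omega
        · by_cases hit : ∃ u ∈ t, i ∈ c u
          · obtain ⟨u, hut, hiu⟩ := hit
            have huv : u ≠ v := by rintro rfl; exact hvt hut
            have hpos : 0 < h₁ u := by rw [← hcard]; exact Finset.card_pos.mpr ⟨i, hiu⟩
            have h3 : ∑ u ∈ t, h₂ u < ∑ u ∈ t, h₁ u := by
              refine Finset.sum_lt_sum (fun u _ => h₂le u) ⟨u, hut, ?_⟩
              simp only [hh₂, hiu, huv, ne_eq, not_false_iff, and_self, if_true]; omega
            have h4 : ∑ u ∈ t, h₁ u ≤ ∑ u ∈ t, h u := Finset.sum_le_sum fun u _ => h₁le u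
            have := hk t ht
            omega
          · have h3 : ∑ u ∈ t, h₂ u ≤ ∑ u ∈ t, h₁ u := Finset.sum_le_sum fun u _ => h₂le u
            have h4 : ∑ u ∈ t, h₁ u = (t.biUnion c).card := by
              rw [Finset.card_biUnion]
              · exact Finset.sum_congr rfl fun u _ => (hcard u).symm
              · intro x hx y hy hxy
                exact hdis x y (ht hx hy hxy)
            have h5 : t.biUnion c ⊆ (Finset.range k).erase i := by
              intro j hj
              obtain ⟨u, hu, hju⟩ := Finset.mem_biUnion.mp hj
              refine Finset.mem_erase.mpr ⟨?_, hck u hju⟩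
              rintro rfl
              exact hit ⟨u, hu, hju⟩
            have h6 := Finset.card_le_card h5
            rw [Finset.card_erase_of_mem (by simpa using hik), Finset.card_range] at h6
            omega)
    have hfresh : ∀ u, k - 1 ∉ d u := by
      intro u hu
      have := hdk u hu
      simp at this
    refine ⟨fun u => if i ∈ c u then insert (k - 1) (d u) else d u, ?_, ?_, ?_⟩
    · intro u j hj
      have hsub : ∀ j ∈ d u, j < k := by
        intro j hj
        have := Finset.mem_range.mp (hdk u hj)
        omega
      simp only at hj
      rw [Finset.mem_range]
      split_ifs at hj
      · rcases Finset.mem_insert.mp hj with rfl | hj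
        · omega
        · exact hsub j hj
      · exact hsub j hj
    · intro u
      by_cases hiu : i ∈ c u
      · simp only [hiu, if_true]
        rw [Finset.card_insert_of_notMem (hfresh u), hdcard]
        have hpos : 0 < h₁ u := by rw [← hcard]; exact Finset.card_pos.mpr ⟨i, hiu⟩
        by_cases huv : u = v
        · subst huv
          simp only [hh₂, hh₁, ne_eq, not_true, and_false, if_false, if_true]; omega
        · have : h₁ u = h u := by simp only [hh₁, huv, if_false]
          simp only [hh₂, hiu, huv, ne_eq, not_false_iff, and_self, if_true]; omega
      · have huv : u ≠ v := by rintro rfl; exact hiu hi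
        simp only [hiu, if_false]
        rw [hdcard]
        simp only [hh₂, hh₁, hiu, huv, false_and, if_false]
    · intro x y hxy
      have hd := hddis x y hxy
      have hnot : ¬ (i ∈ c x ∧ i ∈ c y) := fun ⟨h1, h2⟩ =>
        Finset.disjoint_left.mp (hdis x y hxy) h1 h2
      by_cases hx : i ∈ c x
      · have hy : i ∉ c y := fun h => hnot ⟨hx, h⟩
        simp only [hx, hy, if_true, if_false]
        exact Finset.disjoint_insert_left.mpr ⟨hfresh y, hd⟩
      · by_cases hy : i ∈ c y
        · simp only [hx, hy, if_true, if_false]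
          exact Finset.disjoint_insert_right.mpr ⟨hfresh x, hd⟩
        · simpa only [hx, hy, if_false] using hd
  · push Not at hbig
    have hle : ∀ v, h v = 0 ∨ h v = 1 := fun v => by have := hbig v; omega
    obtain ⟨c, hc, hadj⟩ := hA {v | h v ≠ 0} (fun v hv => hsupp v hv) k (by
      intro t ht hcl
      refine le_trans ?_ (hk t hcl)
      rw [Finset.card_eq_sum_ones]
      refine Finset.sum_le_sum fun v hv => ?_
      have : h v ≠ 0 := ht hv
      omega)
    refine ⟨fun v => if h v = 0 then ∅ else {c v}, ?_, ?_, ?_⟩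
    · intro v
      by_cases h0 : h v = 0
      · simp [h0]
      · simpa [h0] using hc v h0
    · intro v
      rcases hle v with h0 | h0 <;> simp [h0]
    · intro u v huv
      by_cases hu : h u = 0
      · simp [hu]
      · by_cases hv : h v = 0
        · simp [hv]
        · simpa [hu, hv] using hadj u hu v hv huv

/-- Substituting a perfect graph `G[Z]` for the vertex `z` of a perfect graph gives a perfect
graph (Lovász). -/
lemma Perf.substitution {V : Type*} [Fintype V] {G : SimpleGraph V} {A Z : Set V} {z : V}
    (hz : z ∈ Z) (hhom : ∀ u ∈ A, u ∉ Z → ∀ a ∈ Z, ∀ b ∈ Z, G.Adj u a → G.Adj u b)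
    (h₁ : Perf G (insert z (A \ Z))) (h₂ : Perf G (Z ∩ A)) : Perf G A := by
  classical
  intro S hS k hk
  set m := cliqueNumOn G (S ∩ Z) with hm
  obtain ⟨q, hqS, hq⟩ := cliqueNumOn_mem G (S ∩ Z)
  rw [← hm] at hq
  set h : V → ℕ := fun v => if v = z then m else if v ∈ S ∧ v ∉ Z then 1 else 0 with hh
  obtain ⟨c, hck, hcard, hdis⟩ := h₁.multicolor _ h rfl (by
    intro v hv
    by_cases hvz : v = z
    · exact Or.inl hvz
    · right
      simp only [hh, hvz, if_false] at hv
      have : v ∈ S ∧ v ∉ Z := by by_contra hcon; simp [hcon] at hv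
      exact ⟨hS this.1, this.2⟩) k (by
    intro t ht
    set t' := t.filter (fun v => v ∈ S ∧ v ∉ Z) with ht'
    have ht'z : z ∉ t' := by simp [ht', hz]
    have hsum : ∑ v ∈ t', h v = t'.card := by
      rw [Finset.card_eq_sum_ones]
      refine Finset.sum_congr rfl fun v hv => ?_
      have hv' := (Finset.mem_filter.mp hv).2
      have : v ≠ z := by rintro rfl; exact hv'.2 hz
      simp [hh, this, hv']
    have ht'cl : G.IsClique (t' : Set V) := ht.subset (by
      intro v hv; exact (Finset.mem_filter.mp hv).1)
    by_cases hzt : z ∈ t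
    · have hle : ∑ v ∈ t, h v ≤ ∑ v ∈ insert z t', h v := by
        rw [← Finset.sum_filter_ne_zero]
        refine Finset.sum_le_sum_of_subset ?_
        intro v hv
        obtain ⟨hvt, hv0⟩ := Finset.mem_filter.mp hv
        by_cases hvz : v = z
        · simp [hvz]
        · refine Finset.mem_insert_of_mem (Finset.mem_filter.mpr ⟨hvt, ?_⟩)
          by_contra hcon
          simp [hh, hvz, hcon] at hv0
      rw [Finset.sum_insert ht'z, hsum] at hle
      have hzm : h z = m := by simp [hh]
      have hdisj : Disjoint q t' := by
        rw [Finset.disjoint_left]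
        intro v hv hv'
        exact (Finset.mem_filter.mp hv').2.2 (hqS hv).2
      have := hk (q ∪ t') (by
        intro v hv
        rcases Finset.mem_union.mp hv with hv | hv
        · exact (hqS hv).1
        · exact (Finset.mem_filter.mp hv).2.1) (by
        have hcross : ∀ x ∈ q, ∀ y ∈ t', G.Adj x y := by
          intro x hx y hy
          have hy' := Finset.mem_filter.mp hy
          have hyz : y ≠ z := by rintro rfl; exact hy'.2.2 hz
          exact (hhom y (hS hy'.2.1) hy'.2.2 z hz x (hqS hx).2 (ht hy'.1 hzt hyz)).symm
        intro x hx y hy hxy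
        rcases Finset.mem_union.mp hx with hx | hx <;> rcases Finset.mem_union.mp hy with hy | hy
        · exact hq.isClique hx hy hxy
        · exact hcross x hx y hy
        · exact (hcross y hy x hx).symm
        · exact ht'cl hx hy hxy)
      rw [Finset.card_union_of_disjoint hdisj, hq.card_eq] at this
      omega
    · have hle : ∑ v ∈ t, h v ≤ ∑ v ∈ t', h v := by
        rw [← Finset.sum_filter_ne_zero]
        refine Finset.sum_le_sum_of_subset ?_
        intro v hv
        obtain ⟨hvt, hv0⟩ := Finset.mem_filter.mp hv
        have hvz : v ≠ z := by rintro rfl; exact hzt hvt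
        refine Finset.mem_filter.mpr ⟨hvt, ?_⟩
        by_contra hcon
        simp [hh, hvz, hcon] at hv0
      rw [hsum] at hle
      exact hle.trans (hk t' (by
        intro v hv
        exact (Finset.mem_filter.mp hv).2.1) ht'cl))
  obtain ⟨e, he, hadj⟩ := h₂ (S ∩ Z) (fun v hv => ⟨hv.2, hS hv.1⟩) m
    (fun t => le_cliqueNumOn G _ t)
  have hcz : (c z).card = m := by rw [hcard]; simp [hh]
  -- The colours of the set assigned to `z` are listed in increasing order.
  set ι : ℕ → ℕ := fun j => if hj : j < m then (c z).orderEmbOfFin hcz ⟨j, hj⟩ else 0 with hι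
  have hιmem : ∀ j < m, ι j ∈ c z := by
    intro j hj
    simp only [hι, hj, dite_true]
    exact Finset.orderEmbOfFin_mem _ _ _
  have hιinj : ∀ i < m, ∀ j < m, ι i = ι j → i = j := by
    intro i hi j hj hij
    simp only [hι, hi, hj, dite_true] at hij
    simpa using ((c z).orderEmbOfFin hcz).injective hij
  have hone : ∀ v ∈ S, v ∉ Z → ∃ j, c v = {j} := by
    intro v hv hvZ
    have hvz : v ≠ z := by rintro rfl; exact hvZ hz
    rw [← Finset.card_eq_one, hcard]
    simp [hh, hvz, hv, hvZ]
  choose! g hg using hone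
  have hgmem : ∀ v ∈ S, v ∉ Z → g v ∈ c v := by
    intro v hv hvZ; rw [hg v hv hvZ]; simp
  have hcross : ∀ x ∈ S, x ∈ Z → ∀ y ∈ S, y ∉ Z → G.Adj x y → ι (e x) ≠ g y := by
    intro x hx hxZ y hy hyZ hxy heq
    have h3 : G.Adj y z := hhom y (hS hy) hyZ x hxZ z hz hxy.symm
    refine Finset.disjoint_left.mp (hdis y z h3) (hgmem y hy hyZ) ?_
    rw [← heq]
    exact hιmem _ (he x ⟨hx, hxZ⟩)
  refine ⟨fun v => if v ∈ Z then ι (e v) else g v, ?_, ?_⟩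
  · intro v hv
    by_cases hvZ : v ∈ Z
    · simp only [hvZ, if_true]
      exact Finset.mem_range.mp (hck z (hιmem _ (he v ⟨hv, hvZ⟩)))
    · simp only [hvZ, if_false]
      exact Finset.mem_range.mp (hck v (hgmem v hv hvZ))
  · intro u hu v hv huv
    by_cases huZ : u ∈ Z <;> by_cases hvZ : v ∈ Z <;> simp only [huZ, hvZ, if_true, if_false]
    · intro heq
      exact hadj u ⟨hu, huZ⟩ v ⟨hv, hvZ⟩ huv
        (hιinj _ (he u ⟨hu, huZ⟩) _ (he v ⟨hv, hvZ⟩) heq)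
    · exact hcross u hu huZ v hv hvZ huv
    · exact (hcross v hv hvZ u hu huZ huv.symm).symm
    · intro heq
      refine Finset.disjoint_left.mp (hdis u v huv) (hgmem u hu huZ) ?_
      rw [heq]
      exact hgmem v hv hvZ

/-! ### Prime sets and minimal imperfect sets -/

/-- `G[X]` is prime: it has no homogeneous set, a homogeneous set being a proper subset `Z` of
`X` with at least two elements such that no vertex of `X \ Z` has both a neighbour and a
non-neighbour in `Z`. -/
def PrimeOn {V : Type*} (G : SimpleGraph V) (X : Set V) : Prop :=
  ∀ Z ⊆ X, Z ≠ X → Z.Nontrivial →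
    ∃ u ∈ X, u ∉ Z ∧ ∃ a ∈ Z, ∃ b ∈ Z, G.Adj u a ∧ ¬ G.Adj u b

/-- The vertices other than `v` that are not adjacent to `v`. -/
def nonNbrs {V : Type*} (G : SimpleGraph V) (v : V) : Set V := {u | u ≠ v ∧ ¬ G.Adj v u}

lemma wCliqueNumOn_induce {V : Type*} [Finite V] (G : SimpleGraph V) (w : V → ℕ) (s : Set V)
    (B : Set s) :
    wCliqueNumOn (G.induce s) (fun v => w v) B = wCliqueNumOn G w (Subtype.val '' B) := by
  classical
  apply le_antisymm
  · obtain ⟨t, htB, hcl, ht⟩ := wCliqueNumOn_mem (G.induce s) (fun v => w v) B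
    rw [← ht]
    have := le_wCliqueNumOn G w (Subtype.val '' B) (t.map (Function.Embedding.subtype _)) (by
      intro v hv
      simp only [Finset.coe_map, Set.mem_image, Finset.mem_coe] at hv
      obtain ⟨x, hx, rfl⟩ := hv
      exact ⟨x, htB hx, rfl⟩) (by
      intro u hu v hv huv
      simp only [Finset.coe_map, Set.mem_image, Finset.mem_coe] at hu hv
      obtain ⟨x, hx, rfl⟩ := hu
      obtain ⟨y, hy, rfl⟩ := hv
      exact hcl hx hy (fun h => huv (by rw [h])))
    simpa using this
  · obtain ⟨t, htB, hcl, ht⟩ := wCliqueNumOn_mem G w (Subtype.val '' B)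
    rw [← ht]
    have hts : ∀ v ∈ t, v ∈ s := by
      intro v hv
      obtain ⟨x, -, rfl⟩ := htB hv
      exact x.2
    rw [← Finset.sum_subtype_of_mem w hts]
    refine le_wCliqueNumOn (G.induce s) (fun v => w v) B (t.subtype (· ∈ s)) ?_ ?_
    · intro x hx
      obtain ⟨y, hy, hxy⟩ := htB (by simpa using hx : x.1 ∈ (t : Set V))
      rwa [← Subtype.ext hxy]
    · intro x hx y hy hxy
      exact hcl (by simpa using hx) (by simpa using hy) (fun h => hxy (Subtype.ext h))

lemma MNWD.partition {V : Type*} [Finite V] {G : SimpleGraph V} (h : MNWD G) {s : Set V}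
    (hs : s ≠ Set.univ) (hne : s.Nonempty) (w : V → ℕ) (hw : ∀ v, 0 < w v) :
    ∃ P W : Set V, P ∪ W = s ∧ P ∩ W = ∅ ∧ Perf G P ∧
      wCliqueNumOn G w W < wCliqueNumOn G w s := by
  obtain ⟨P, W, hPW, hdis, hP, hlt⟩ := h.2 s hs (fun v => w v) (fun v => hw v) Set.univ
    (by obtain ⟨v, hv⟩ := hne; exact ⟨⟨v, hv⟩, trivial⟩)
  refine ⟨Subtype.val '' P, Subtype.val '' W, ?_, ?_, ?_, ?_⟩
  · rw [← Set.image_union, hPW]; simp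
  · rw [← Set.image_inter Subtype.val_injective, hdis]; simp
  · rw [isPerfect_induce_iff] at hP
    exact (perf_induce G s P).1 hP
  · rw [wCliqueNumOn_induce, wCliqueNumOn_induce] at hlt
    simpa using hlt

lemma MNWD.exists_weight {V : Type*} [Finite V] {G : SimpleGraph V} (h : MNWD G) :
    Nonempty V ∧ ∃ w : V → ℕ, (∀ v, 0 < w v) ∧ ∀ P W : Set V, P ∪ W = Set.univ → P ∩ W = ∅ →
      Perf G P → wCliqueNumOn G w Set.univ ≤ wCliqueNumOn G w W := by
  have h1 := h.1
  unfold PerfectlyWeightDivisible at h1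
  push Not at h1
  obtain ⟨w, hw, s, hs, hbad⟩ := h1
  refine ⟨⟨hs.some⟩, w, hw, ?_⟩
  by_cases hsu : s = Set.univ
  · subst hsu
    intro P W hPW hdis hP
    exact hbad P W hPW hdis ((isPerfect_induce_iff G P).2 hP)
  · obtain ⟨P, W, hPW, hdis, hP, hlt⟩ := h.partition hsu hs w hw
    have := hbad P W hPW hdis ((isPerfect_induce_iff G P).2 hP)
    omega

lemma Perf.insert_isolated {V : Type*} {G : SimpleGraph V} {A : Set V} {v : V}
    (hA : Perf G A) (hv : ∀ u ∈ A, ¬ G.Adj v u) : Perf G (insert v A) := by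
  classical
  intro S hS k hk
  obtain ⟨c, hc, hadj⟩ := hA (S \ {v}) (by
    rintro u ⟨hu, huv⟩
    exact (hS hu).resolve_left huv) k
    (fun t ht => hk t (ht.trans Set.sdiff_subset))
  have hiso : ∀ u ∈ S, ¬ G.Adj v u := by
    intro u hu huv
    exact hv u ((hS hu).resolve_left huv.ne') huv
  refine ⟨fun u => if u = v then 0 else c u, ?_, ?_⟩
  · intro u hu
    by_cases huv : u = v
    · subst huv
      have := hk {u} (by simpa using hu) (by simp)
      simp at this ⊢
      omega
    · simpa [huv] using hc u ⟨hu, huv⟩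
  · intro x hx y hy hxy
    have hxv : x ≠ v := by rintro rfl; exact hiso y hy hxy
    have hyv : y ≠ v := by rintro rfl; exact hiso x hx hxy.symm
    simpa [hxv, hyv] using hadj x ⟨hx, hxv⟩ y ⟨hy, hyv⟩ hxy

/-- If the non-neighbours of `v` induced a perfect graph, then they could be put together with
`v` into the perfect part: every clique of neighbours of `v` can be enlarged by `v`. -/
lemma MNWD.not_perf_nonNbrs {V : Type*} [Fintype V] {G : SimpleGraph V} (h : MNWD G) (v : V) :
    ¬ Perf G (nonNbrs G v) := by
  classical
  intro hP
  obtain ⟨-, w, hw, hbad⟩ := h.exists_weight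
  have hle := hbad (insert v (nonNbrs G v)) (G.neighborSet v) (by
    ext u
    simp only [nonNbrs, Set.mem_union, Set.mem_insert_iff, Set.mem_ofPred_eq, mem_neighborSet,
      Set.mem_univ, iff_true]
    tauto) (by
    ext u
    simp only [nonNbrs, Set.mem_inter_iff, Set.mem_insert_iff, Set.mem_ofPred_eq, mem_neighborSet,
      Set.mem_empty_iff_false, iff_false]
    rintro ⟨rfl | h1, h2⟩
    · exact h2.ne rfl
    · exact h1.2 h2) (hP.insert_isolated fun u hu => hu.2)
  obtain ⟨t, htN, hcl, ht⟩ := wCliqueNumOn_mem G w (G.neighborSet v)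
  have hvt : v ∉ t := fun hvt => (htN hvt : G.Adj v v).ne rfl
  have := le_wCliqueNumOn G w Set.univ (insert v t) (Set.subset_univ _) (by
    rw [Finset.coe_insert]
    exact hcl.insert fun b hb _ => htN hb)
  rw [Finset.sum_insert hvt] at this
  have := hw v
  omega

/-- A minimally non-perfectly weight divisible graph has no homogeneous set `Z`: otherwise
contract `Z` to one of its vertices `z`, with weight the maximum weight of a clique in `Z`,
and combine partitions of the contracted graph and of `G[Z]`. -/
lemma MNWD.primeOn {V : Type*} [Fintype V] {G : SimpleGraph V} (h : MNWD G) :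
    PrimeOn G Set.univ := by
  classical
  intro Z _ hZ hnt
  by_contra hcon
  have hhom : ∀ u, u ∉ Z → ∀ a ∈ Z, ∀ b ∈ Z, G.Adj u a → G.Adj u b := by
    intro u hu a ha b hb hua
    by_contra hub
    exact hcon ⟨u, trivial, hu, a, ha, b, hb, hua, hub⟩
  obtain ⟨-, w, hw, hbad⟩ := h.exists_weight
  obtain ⟨z, hz, z', hz', hzz'⟩ := hnt
  obtain ⟨P₂, W₂, hPW₂, hdis₂, hP₂, hlt₂⟩ := h.partition hZ ⟨z, hz⟩ w hw
  have hsne : insert z Zᶜ ≠ Set.univ := by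
    intro heq
    have : z' ∈ insert z Zᶜ := heq ▸ trivial
    rcases this with h1 | h1
    · exact hzz' h1.symm
    · exact h1 hz'
  set m := wCliqueNumOn G w Z with hm
  have hmpos : 0 < m := by omega
  set w' : V → ℕ := fun v => if v = z then m else w v with hw'
  obtain ⟨P₁, W₁, hPW₁, hdis₁, hP₁, hlt₁⟩ := h.partition hsne ⟨z, by simp⟩ w' (by
    intro v
    by_cases hv : v = z
    · simpa [hw', hv] using hmpos
    · simpa [hw', hv] using hw v)
  have hw'z : w' z = m := by simp [hw']
  have hw'sum : ∀ t : Finset V, z ∉ t → ∑ v ∈ t, w' v = ∑ v ∈ t, w v := by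
    intro t hzt
    refine Finset.sum_congr rfl fun v hv => ?_
    have : v ≠ z := by rintro rfl; exact hzt hv
    simp [hw', this]
  -- A clique of vertices outside `Z` that are complete to `Z`, joined with a clique of `Z`.
  have hjoin : ∀ t q : Finset V, G.IsClique (t : Set V) → (∀ v ∈ t, v ∉ Z ∧ G.Adj v z) →
      G.IsClique (q : Set V) → ↑q ⊆ Z →
      G.IsClique ((t ∪ q : Finset V) : Set V) ∧ ∑ v ∈ t ∪ q, w v = ∑ v ∈ t, w v + ∑ v ∈ q, w v := by
    intro t q ht htZ hq hqZ
    constructor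
    · have hcross : ∀ x ∈ t, ∀ y ∈ q, G.Adj x y := fun x hx y hy =>
        hhom x (htZ x hx).1 z hz y (hqZ hy) (htZ x hx).2
      intro x hx y hy hxy
      rcases Finset.mem_union.mp hx with hx | hx <;> rcases Finset.mem_union.mp hy with hy | hy
      · exact ht hx hy hxy
      · exact hcross x hx y hy
      · exact (hcross y hy x hx).symm
      · exact hq hx hy hxy
    · rw [Finset.sum_union]
      rw [Finset.disjoint_left]
      intro v hv hvq
      exact (htZ v hv).1 (hqZ hvq)
  obtain ⟨q, hqZ, hq, hqm⟩ := wCliqueNumOn_mem G w Z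
  rw [← hm] at hqm
  have hup : wCliqueNumOn G w' (insert z Zᶜ) ≤ wCliqueNumOn G w Set.univ := by
    obtain ⟨t, htS, hcl, ht⟩ := wCliqueNumOn_mem G w' (insert z Zᶜ)
    rw [← ht]
    by_cases hzt : z ∈ t
    · obtain ⟨hc, hs⟩ := hjoin (t.erase z) q
        (hcl.subset (by simp)) (by
          intro v hv
          obtain ⟨hvz, hvt⟩ := Finset.mem_erase.mp hv
          exact ⟨(htS hvt).resolve_left hvz, hcl hvt hzt hvz⟩) hq hqZ
      have := le_wCliqueNumOn G w Set.univ _ (Set.subset_univ _) hc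
      rw [hs, hqm] at this
      rw [← Finset.sum_erase_add _ _ hzt, hw'z, hw'sum _ (by simp)]
      exact this
    · rw [hw'sum t hzt]
      exact le_wCliqueNumOn G w Set.univ t (Set.subset_univ _) hcl
  have hPZ : ∀ v ∈ P₁, v ≠ z → v ∉ Z := by
    intro v hv hvz
    have : v ∈ insert z Zᶜ := hPW₁ ▸ Or.inl hv
    exact this.resolve_left hvz
  have hWZ : ∀ v ∈ W₁, v ≠ z → v ∉ Z := by
    intro v hv hvz
    have : v ∈ insert z Zᶜ := hPW₁ ▸ Or.inr hv
    exact this.resolve_left hvz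
  have hcov : ∀ v, v ∉ Z → v ∈ P₁ ∨ v ∈ W₁ := by
    intro v hv
    have : v ∈ P₁ ∪ W₁ := hPW₁ ▸ Or.inr hv
    exact this
  have hcov₂ : ∀ v ∈ Z, v ∈ P₂ ∨ v ∈ W₂ := by
    intro v hv
    have : v ∈ P₂ ∪ W₂ := hPW₂ ▸ hv
    exact this
  have hP₂Z : P₂ ⊆ Z := hPW₂ ▸ Set.subset_union_left
  have hW₂Z : W₂ ⊆ Z := hPW₂ ▸ Set.subset_union_right
  have hdis : ∀ v, v ∈ P₁ → v ∈ W₁ → False := fun v h1 h2 => by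
    have : v ∈ P₁ ∩ W₁ := ⟨h1, h2⟩
    simp [hdis₁] at this
  have hdis' : ∀ v, v ∈ P₂ → v ∈ W₂ → False := fun v h1 h2 => by
    have : v ∈ P₂ ∩ W₂ := ⟨h1, h2⟩
    simp [hdis₂] at this
  by_cases hzW : z ∈ W₁
  · have hzP : z ∉ P₁ := fun hzP => hdis z hzP hzW
    have hle := hbad P₁ (W₁ ∪ Z) (by
      ext v
      simp only [Set.mem_union, Set.mem_univ, iff_true]
      by_cases hv : v ∈ Z
      · exact Or.inr (Or.inr hv)
      · rcases hcov v hv with h1 | h1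
        · exact Or.inl h1
        · exact Or.inr (Or.inl h1)) (by
      ext v
      simp only [Set.mem_inter_iff, Set.mem_union, Set.mem_empty_iff_false, iff_false]
      rintro ⟨h1, h2 | h2⟩
      · exact hdis v h1 h2
      · exact hPZ v h1 (by rintro rfl; exact hzP h1) h2) hP₁
    have hlow : wCliqueNumOn G w (W₁ ∪ Z) ≤ wCliqueNumOn G w' W₁ := by
      obtain ⟨t, htS, hcl, ht⟩ := wCliqueNumOn_mem G w (W₁ ∪ Z)
      rw [← ht]
      set t₁ := t.filter (· ∉ Z) with ht₁
      set t₂ := t.filter (· ∈ Z) with ht₂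
      have hsplit : ∑ v ∈ t, w v = ∑ v ∈ t₁, w v + ∑ v ∈ t₂, w v := by
        rw [add_comm, ht₁, ht₂, Finset.sum_filter_add_sum_filter_not]
      have ht₁W : ∀ v ∈ t₁, v ∈ W₁ := by
        intro v hv
        obtain ⟨hvt, hvZ⟩ := Finset.mem_filter.mp hv
        exact (htS hvt).resolve_right hvZ
      have hzt₁ : z ∉ t₁ := by simp [ht₁, hz]
      have hcl₁ : G.IsClique (t₁ : Set V) := hcl.subset fun v hv => (Finset.mem_filter.mp hv).1
      rcases t₂.eq_empty_or_nonempty with he | ⟨x, hx⟩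
      · rw [hsplit, he, Finset.sum_empty, add_zero, ← hw'sum _ hzt₁]
        exact le_wCliqueNumOn G w' W₁ t₁ ht₁W hcl₁
      · have h2 : ∑ v ∈ t₂, w v ≤ m := le_wCliqueNumOn G w Z t₂
          (fun v hv => (Finset.mem_filter.mp hv).2)
          (hcl.subset fun v hv => (Finset.mem_filter.mp hv).1)
        have h3 := le_wCliqueNumOn G w' W₁ (insert z t₁) (by
          intro v hv
          rcases Finset.mem_insert.mp hv with rfl | hv
          · exact hzW
          · exact ht₁W v hv) (by
          rw [Finset.coe_insert]
          refine hcl₁.insert fun b hb _ => ?_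
          obtain ⟨hbt, hbZ⟩ := Finset.mem_filter.mp hb
          obtain ⟨hxt, hxZ⟩ := Finset.mem_filter.mp hx
          exact (hhom b hbZ x hxZ z hz
            (hcl hbt hxt (by rintro rfl; exact hbZ hxZ))).symm)
        rw [Finset.sum_insert hzt₁, hw'z, hw'sum _ hzt₁] at h3
        omega
    omega
  · have hzP : z ∈ P₁ := by
      have : z ∈ P₁ ∪ W₁ := hPW₁ ▸ Or.inl rfl
      exact this.resolve_right hzW
    have hWZ' : ∀ v ∈ W₁, v ∉ Z := fun v hv => hWZ v hv (by rintro rfl; exact hzW hv)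
    have hle := hbad ((P₁ \ {z}) ∪ P₂) (W₁ ∪ W₂) (by
      ext v
      simp only [Set.mem_union, Set.mem_univ, iff_true, Set.mem_sdiff, Set.mem_singleton_iff]
      by_cases hv : v ∈ Z
      · rcases hcov₂ v hv with h1 | h1
        · exact Or.inl (Or.inr h1)
        · exact Or.inr (Or.inr h1)
      · rcases hcov v hv with h1 | h1
        · exact Or.inl (Or.inl ⟨h1, by rintro rfl; exact hv hz⟩)
        · exact Or.inr (Or.inl h1)) (by
      ext v
      simp only [Set.mem_inter_iff, Set.mem_union, Set.mem_empty_iff_false, iff_false,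
        Set.mem_sdiff, Set.mem_singleton_iff]
      rintro ⟨⟨h1, h1'⟩ | h1, h2 | h2⟩
      · exact hdis v h1 h2
      · exact hPZ v h1 h1' (hW₂Z h2)
      · exact hWZ' v h2 (hP₂Z h1)
      · exact hdis' v h1 h2) (by
      refine Perf.substitution (Z := Z) hz (fun u _ => hhom u) (hP₁.mono ?_) (hP₂.mono ?_)
      · rintro v (rfl | ⟨⟨h1, -⟩ | h1, h2⟩)
        · exact hzP
        · exact h1
        · exact absurd (hP₂Z h1) h2
      · rintro v ⟨h1, ⟨h2, h3⟩ | h2⟩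
        · exact absurd h1 (hPZ v h2 h3)
        · exact h2)
    have hlow : wCliqueNumOn G w (W₁ ∪ W₂) < wCliqueNumOn G w Set.univ := by
      obtain ⟨t, htS, hcl, ht⟩ := wCliqueNumOn_mem G w (W₁ ∪ W₂)
      rw [← ht]
      set t₁ := t.filter (· ∉ Z) with ht₁
      set t₂ := t.filter (· ∈ Z) with ht₂
      have hsplit : ∑ v ∈ t, w v = ∑ v ∈ t₁, w v + ∑ v ∈ t₂, w v := by
        rw [add_comm, ht₁, ht₂, Finset.sum_filter_add_sum_filter_not]
      have ht₁W : ∀ v ∈ t₁, v ∈ W₁ := by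
        intro v hv
        obtain ⟨hvt, hvZ⟩ := Finset.mem_filter.mp hv
        exact (htS hvt).resolve_right fun hv2 => hvZ (hW₂Z hv2)
      have ht₂W : ∀ v ∈ t₂, v ∈ W₂ := by
        intro v hv
        obtain ⟨hvt, hvZ⟩ := Finset.mem_filter.mp hv
        exact (htS hvt).resolve_left fun hv2 => hWZ' v hv2 hvZ
      have hzt₁ : z ∉ t₁ := by simp [ht₁, hz]
      have hcl₁ : G.IsClique (t₁ : Set V) := hcl.subset fun v hv => (Finset.mem_filter.mp hv).1
      rcases t₂.eq_empty_or_nonempty with he | ⟨x, hx⟩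
      · rw [hsplit, he, Finset.sum_empty, add_zero, ← hw'sum _ hzt₁]
        have := le_wCliqueNumOn G w' W₁ t₁ ht₁W hcl₁
        omega
      · have h2 : ∑ v ∈ t₂, w v ≤ wCliqueNumOn G w W₂ := le_wCliqueNumOn G w W₂ t₂ ht₂W
          (hcl.subset fun v hv => (Finset.mem_filter.mp hv).1)
        obtain ⟨hc, hs⟩ := hjoin t₁ q hcl₁ (by
          intro b hb
          obtain ⟨hbt, hbZ⟩ := Finset.mem_filter.mp hb
          obtain ⟨hxt, hxZ⟩ := Finset.mem_filter.mp hx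
          exact ⟨hbZ, hhom b hbZ x hxZ z hz
            (hcl hbt hxt (by rintro rfl; exact hbZ hxZ))⟩) hq hqZ
        have h3 := le_wCliqueNumOn G w Set.univ _ (Set.subset_univ _) hc
        omega
    omega

/-- The properties of minimal imperfect induced subgraphs used below: `G[F]` is prime, no vertex
is simplicial, and `F` is not the union of two stable sets. -/
structure Core {V : Type*} (G : SimpleGraph V) (F : Set V) : Prop where
  nonempty : F.Nonempty
  prime : PrimeOn G F
  nonsimplicial : ∀ f ∈ F, ∃ x ∈ F, ∃ y ∈ F, G.Adj f x ∧ G.Adj f y ∧ x ≠ y ∧ ¬ G.Adj x y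
  nonbipartite : ∀ N : Set V, (∀ x ∈ F, x ∈ N → ∀ y ∈ F, y ∈ N → ¬ G.Adj x y) →
    ∃ x ∈ F, x ∉ N ∧ ∃ y ∈ F, y ∉ N ∧ G.Adj x y

lemma exists_core {V : Type*} [Fintype V] {G : SimpleGraph V} {A : Set V} (hA : ¬ Perf G A) :
    ∃ F ⊆ A, Core G F := by
  classical
  obtain ⟨F, hFA, hmin⟩ := Set.Finite.exists_le_minimal (Set.toFinite {B : Set V | ¬ Perf G B}) hA
  have hF : ¬ Perf G F := hmin.prop
  have hsub : ∀ B ⊆ F, B ≠ F → Perf G B := by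
    intro B hB hne
    by_contra hcon
    exact hne (Set.Subset.antisymm hB (hmin.le_of_le hcon hB))
  refine ⟨F, hFA, ?_, ?_, ?_, ?_⟩
  · rw [Set.nonempty_iff_ne_empty]
    rintro rfl
    apply hF
    intro S hS k _
    exact ⟨fun _ => 0, fun v hv => (hS hv).elim, fun v hv => (hS hv).elim⟩
  · intro Z hZF hne hnt
    by_contra hcon
    obtain ⟨z, hz, z', hz', hzz'⟩ := hnt
    apply hF
    refine Perf.substitution (Z := Z) hz ?_ (hsub _ ?_ ?_) ((hsub Z hZF hne).mono fun v hv => hv.1)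
    · intro u hu huZ a ha b hb hua
      by_contra hub
      exact hcon ⟨u, hu, huZ, a, ha, b, hb, hua, hub⟩
    · rintro v (rfl | hv)
      · exact hZF hz
      · exact hv.1
    · intro heq
      have : z' ∈ insert z (F \ Z) := by rw [heq]; exact hZF hz'
      rcases this with h1 | h1
      · exact hzz' h1.symm
      · exact h1.2 hz'
  · intro f hf
    by_contra hcon
    push Not at hcon
    apply hF
    -- A simplicial vertex has fewer than `k` neighbours, so a colouring of the rest extends.
    intro S hS k hk
    by_cases hfS : f ∈ S
    · obtain ⟨c, hc, hadj⟩ := hsub (F \ {f}) Set.sdiff_subset (by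
        intro heq
        have : f ∈ F \ {f} := by rw [heq]; exact hf
        exact this.2 rfl) (S \ {f}) (Set.sdiff_subset_sdiff_left hS) k
        (fun t ht => hk t (ht.trans Set.sdiff_subset))
      set N : Finset V := Finset.univ.filter fun v => v ∈ S ∧ G.Adj f v with hN
      have hNmem : ∀ v ∈ N, v ∈ S ∧ G.Adj f v := fun v hv => (Finset.mem_filter.mp hv).2
      have hfN : f ∉ N := fun h => (hNmem f h).2.ne rfl
      have hcard := hk (insert f N) (by
        intro v hv
        rcases Finset.mem_insert.mp hv with rfl | hv
        · exact hfS
        · exact (hNmem v hv).1) (by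
        rw [Finset.coe_insert]
        refine IsClique.insert ?_ fun b hb _ => (hNmem b hb).2
        intro x hx y hy hxy
        exact hcon x (hS (hNmem x hx).1) y (hS (hNmem y hy).1) (hNmem x hx).2 (hNmem y hy).2 hxy)
      rw [Finset.card_insert_of_notMem hfN] at hcard
      obtain ⟨j, hjk, hj⟩ : ∃ j ∈ Finset.range k, j ∉ N.image c := by
        by_contra hall
        push Not at hall
        have h1 := Finset.card_le_card (fun j hj => hall j hj : Finset.range k ⊆ N.image c)
        have h2 := Finset.card_image_le (s := N) (f := c)
        rw [Finset.card_range] at h1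
        omega
      have hjn : ∀ v ∈ S, G.Adj f v → j ≠ c v := by
        intro v hv hfv hjc
        exact hj (Finset.mem_image.mpr ⟨v, Finset.mem_filter.mpr ⟨Finset.mem_univ _, hv, hfv⟩,
          hjc.symm⟩)
      refine ⟨fun v => if v = f then j else c v, ?_, ?_⟩
      · intro v hv
        by_cases hvf : v = f
        · simpa [hvf] using hjk
        · simpa [hvf] using hc v ⟨hv, hvf⟩
      · intro x hx y hy hxy
        by_cases hxf : x = f
        · subst hxf
          simpa [hxy.ne'] using hjn y hy hxy
        · by_cases hyf : y = f
          · subst hyf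
            simpa [hxf] using (hjn x hx hxy.symm).symm
          · simpa [hxf, hyf] using hadj x ⟨hx, hxf⟩ y ⟨hy, hyf⟩ hxy
    · exact hsub (F \ {f}) Set.sdiff_subset (by
        intro heq
        have : f ∈ F \ {f} := by rw [heq]; exact hf
        exact this.2 rfl) S (fun v hv => ⟨hS hv, by rintro rfl; exact hfS hv⟩) k hk
  · intro N hN
    by_contra hcon
    push Not at hcon
    apply hF
    intro S hS k hk
    by_cases hedge : ∃ x ∈ S, ∃ y ∈ S, G.Adj x y
    · obtain ⟨x, hx, y, hy, hxy⟩ := hedge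
      have h2 := hk {x, y} (by
        intro v hv
        simp only [Finset.coe_insert, Finset.coe_singleton, Set.mem_insert_iff,
          Set.mem_singleton_iff] at hv
        rcases hv with rfl | rfl <;> assumption) (by
        rw [Finset.coe_insert, Finset.coe_singleton]
        exact IsClique.insert (by simp) (by simpa using fun _ => hxy))
      rw [Finset.card_pair hxy.ne] at h2
      refine ⟨fun v => if v ∈ N then 0 else 1, ?_, ?_⟩
      · intro v _
        dsimp only
        split_ifs <;> omega
      · intro u hu v hv huv
        by_cases huN : u ∈ N <;> by_cases hvN : v ∈ N <;> simp only [huN, hvN, if_true, if_false]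
        · exact absurd huv (hN u (hS hu) huN v (hS hv) hvN)
        · simp
        · simp
        · exact absurd huv (hcon u (hS hu) huN v (hS hv) hvN)
    · push Not at hedge
      refine ⟨fun _ => 0, ?_, fun u hu v hv huv => absurd huv (hedge u hu v hv)⟩
      intro v hv
      have := hk {v} (by simpa using hv) (by simp)
      simpa [Nat.one_le_iff_ne_zero, Nat.pos_iff_ne_zero] using this

/-! ### Forbidden induced subgraphs -/

/-- A map that preserves and reflects adjacency is injective when no two vertices of `H` have the
same neighbours. -/
lemma ContainsInduced.of_adj_iff {α β : Type*} {G : SimpleGraph α} {H : SimpleGraph β} (f : β → α)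
    (hH : ∀ i j, (∀ k, H.Adj i k ↔ H.Adj j k) → i = j)
    (hf : ∀ i j, G.Adj (f i) (f j) ↔ H.Adj i j) : ContainsInduced G H :=
  ⟨⟨f, fun i j hij => hH i j fun k => by rw [← hf, ← hf, hij]⟩, hf⟩

section Forbidden

variable {V : Type*} {G : SimpleGraph V} {a b c d e : V}

lemma IsFree.no_bull (h : IsFree G bull) (ab : G.Adj a b) (ac : G.Adj a c) (bc : G.Adj b c)
    (ad : G.Adj a d) (be : G.Adj b e) (ae : ¬ G.Adj a e) (bd : ¬ G.Adj b d) (cd : ¬ G.Adj c d)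
    (ce : ¬ G.Adj c e) (de : ¬ G.Adj d e) : False := by
  refine h (.of_adj_iff ![a, b, c, d, e] ?_ ?_)
  · simp only [bull, fromEdgeSet_adj]
    decide
  · intro i j
    fin_cases i <;> fin_cases j <;> simp [bull, *, G.adj_comm _ _]

lemma IsFree.no_hammer (h : IsFree G hammer) (ab : G.Adj a b) (ac : G.Adj a c) (bc : G.Adj b c)
    (cd : G.Adj c d) (de : G.Adj d e) (ad : ¬ G.Adj a d) (bd : ¬ G.Adj b d) (ae : ¬ G.Adj a e)
    (be : ¬ G.Adj b e) (ce : ¬ G.Adj c e) : False := by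
  refine h (.of_adj_iff ![a, b, c, d, e] ?_ ?_)
  · simp only [hammer, fromEdgeSet_adj]
    decide
  · have hs : ∀ {x y}, ¬ G.Adj x y → ¬ G.Adj y x := fun h1 h2 => h1 h2.symm
    intro i j
    fin_cases i <;> fin_cases j <;>
      simp [hammer, *, ab.symm, ac.symm, bc.symm, cd.symm, de.symm, hs ad, hs bd, hs ae, hs be, hs ce]

/-- The house, as the four-cycle `a b c d` with a roof `e` adjacent to `a` and `b`. -/
lemma IsFree.no_house (h : IsFree G house) (ab : G.Adj a b) (bc : G.Adj b c) (cd : G.Adj c d)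
    (da : G.Adj d a) (ea : G.Adj e a) (eb : G.Adj e b) (ac : ¬ G.Adj a c) (bd : ¬ G.Adj b d)
    (ec : ¬ G.Adj e c) (ed : ¬ G.Adj e d) : False := by
  have hadj : ∀ i j : Fin 5, house.Adj i j ↔ i ≠ j ∧ ¬ (i.val + 1 = j.val ∨ j.val + 1 = i.val) := by
    intro i j
    simp [house, pathGraph_adj]
  refine h (.of_adj_iff ![a, c, e, d, b] ?_ ?_)
  · simp only [hadj]
    decide
  · have hs : ∀ {x y}, ¬ G.Adj x y → ¬ G.Adj y x := fun h1 h2 => h1 h2.symm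
    intro i j
    rw [hadj]
    fin_cases i <;> fin_cases j <;>
      simp [*, ab.symm, bc.symm, cd.symm, da.symm, ea.symm, eb.symm, hs ac, hs bd, hs ec, hs ed]

end Forbidden

/-! ### Consequences of primeness -/

section Prime

variable {V : Type*} {G : SimpleGraph V} {X N : Set V}

/-- If `N` is a proper subset of a prime set `X` and `q ~ r` is an edge inside `N`, then some
vertex of `X` outside `N` splits an edge inside `N`: the component of `q` in `G[N]` is not a
homogeneous set. -/
lemma PrimeOn.exists_split (hX : PrimeOn G X) (hN : N ⊆ X) (hne : N ≠ X) {q r : V} (hq : q ∈ N)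
    (hr : r ∈ N) (hqr : G.Adj q r) :
    ∃ u ∈ X, u ∉ N ∧ ∃ a ∈ N, ∃ b ∈ N, G.Adj a b ∧ G.Adj u a ∧ ¬ G.Adj u b := by
  set Z : Set V := {z | Relation.ReflTransGen (fun x y => y ∈ N ∧ G.Adj x y) q z} with hZ
  have hqZ : q ∈ Z := Relation.ReflTransGen.refl
  have hrZ : r ∈ Z := Relation.ReflTransGen.single ⟨hr, hqr⟩
  have hZN : Z ⊆ N := by
    intro z hz
    induction hz with
    | refl => exact hq
    | tail _ h _ => exact h.1
  obtain ⟨u, huX, huZ, a, ha, b, hb, hua, hub⟩ := hX Z (hZN.trans hN)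
    (fun h => hne (hN.antisymm (h ▸ hZN))) ⟨q, hqZ, r, hrZ, hqr.ne⟩
  have huN : u ∉ N := fun huN => huZ (Relation.ReflTransGen.tail ha ⟨huN, hua.symm⟩)
  refine ⟨u, huX, huN, ?_⟩
  by_contra hcon
  push Not at hcon
  have hall : ∀ z ∈ Z, (G.Adj u q ↔ G.Adj u z) := by
    intro z hz
    induction hz with
    | refl => rfl
    | tail h1 h2 ih =>
      rw [ih]
      exact ⟨hcon _ (hZN h1) _ h2.1 h2.2, hcon _ h2.1 _ (hZN h1) h2.2.symm⟩
  exact hub ((hall b hb).1 ((hall a ha).2 hua))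

lemma PrimeOn.compl (hX : PrimeOn G X) : PrimeOn Gᶜ X := by
  intro Z hZ hne hnt
  obtain ⟨u, huX, huZ, a, ha, b, hb, hua, hub⟩ := hX Z hZ hne hnt
  exact ⟨u, huX, huZ, b, hb, a, ha, ⟨fun h => huZ (h ▸ hb), hub⟩, fun h => h.2 hua⟩

/-- A prime set with at least three elements induces a connected subgraph. -/
lemma PrimeOn.connected (hX : PrimeOn G X) {x y z : V} (hx : x ∈ X) (hy : y ∈ X) (hz : z ∈ X)
    (hxy : x ≠ y) (hxz : x ≠ z) (hyz : y ≠ z) {Z : Set V} (hZ : Z ⊆ X) (hne : Z ≠ X)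
    (hnon : Z.Nonempty) : ∃ u ∈ X, u ∉ Z ∧ ∃ p ∈ Z, G.Adj u p := by
  rcases Set.subsingleton_or_nontrivial Z with hs | hs
  · obtain ⟨p, hp⟩ := hnon
    have hmem : ∀ v, v ∈ X → v ≠ p → v ∈ X \ Z := fun v hv hvp => ⟨hv, fun h => hvp (hs h hp)⟩
    have hnt : (X \ Z).Nontrivial := by
      by_cases h1 : x = p
      · exact ⟨y, hmem y hy (fun h => hxy (h1.trans h.symm)), z,
          hmem z hz (fun h => hxz (h1.trans h.symm)), hyz⟩
      · by_cases h2 : y = p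
        · exact ⟨x, hmem x hx h1, z, hmem z hz (fun h => hyz (h2.trans h.symm)), hxz⟩
        · exact ⟨x, hmem x hx h1, y, hmem y hy h2, hxy⟩
    obtain ⟨u, huX, hu, a, ha, -, -, hua, -⟩ := hX (X \ Z) Set.sdiff_subset
      (fun h => by rw [← h] at hZ; exact (hZ hp).2 hp) hnt
    have huZ : u ∈ Z := by
      by_contra h
      exact hu ⟨huX, h⟩
    exact ⟨a, ha.1, ha.2, u, huZ, hua.symm⟩
  · obtain ⟨u, huX, huZ, a, ha, -, -, hua, -⟩ := hX Z hZ hne hs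
    exact ⟨u, huX, huZ, a, ha, hua⟩

variable {F : Set V}

lemma Core.connected (hF : Core G F) {Z : Set V} (hZ : Z ⊆ F) (hne : Z ≠ F) (hnon : Z.Nonempty) :
    ∃ u ∈ F, u ∉ Z ∧ ∃ p ∈ Z, G.Adj u p := by
  obtain ⟨f, hf⟩ := hF.nonempty
  obtain ⟨x, hx, y, hy, hfx, hfy, hxy, -⟩ := hF.nonsimplicial f hf
  exact hF.prime.connected hf hx hy hfx.ne hfy.ne hxy hZ hne hnon

lemma Core.anticonnected (hF : Core G F) {Z : Set V} (hZ : Z ⊆ F) (hne : Z ≠ F)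
    (hnon : Z.Nonempty) : ∃ u ∈ F, u ∉ Z ∧ ∃ p ∈ Z, ¬ G.Adj u p := by
  obtain ⟨f, hf⟩ := hF.nonempty
  obtain ⟨x, hx, y, hy, hfx, hfy, hxy, -⟩ := hF.nonsimplicial f hf
  obtain ⟨u, hu, huZ, p, hp, hup⟩ :=
    hF.prime.compl.connected hf hx hy hfx.ne hfy.ne hxy hZ hne hnon
  exact ⟨u, hu, huZ, p, hp, hup.2⟩

end Prime

/-! ### Attachments to a core in a prime bull-free graph -/

/-- The neighbours of `p` in `X` form a stable set. -/
def StableNbrs {V : Type*} (G : SimpleGraph V) (X : Set V) (p : V) : Prop :=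
  ∀ x ∈ X, ∀ y ∈ X, G.Adj p x → G.Adj p y → ¬ G.Adj x y

section Attachments

variable {V : Type*} {G : SimpleGraph V} {F : Set V}

lemma Core.exists_edge (hF : Core G F) : ∃ x ∈ F, ∃ y ∈ F, G.Adj x y := by
  obtain ⟨x, hx, -, y, hy, -, hxy⟩ := hF.nonbipartite ∅ (by simp)
  exact ⟨x, hx, y, hy, hxy⟩

lemma Core.nontrivial (hF : Core G F) : F.Nontrivial := by
  obtain ⟨x, hx, y, hy, hxy⟩ := hF.exists_edge
  exact ⟨x, hx, y, hy, hxy.ne⟩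

lemma Core.exists_not_adj (hF : Core G F) {s : V} (hs : StableNbrs G F s) :
    ∃ f ∈ F, ¬ G.Adj s f := by
  by_contra hcon
  push Not at hcon
  obtain ⟨x, hx, y, hy, hxy⟩ := hF.exists_edge
  exact hs x hx y hy (hcon x hx) (hcon y hy) hxy

/-- A vertex outside the core with a neighbour `b` anticomplete to the core is either complete to
the core or has a stable neighbourhood there. -/
lemma Core.stable_or_complete (hF : Core G F) (hb : IsFree G bull) {a b : V}
    (hbF : ∀ f ∈ F, ¬ G.Adj b f) (hab : G.Adj a b) :
    StableNbrs G F a ∨ ∀ f ∈ F, G.Adj a f := by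
  by_contra hcon
  unfold StableNbrs at hcon
  push Not at hcon
  obtain ⟨⟨q, hq, r, hr, haq, har, hqr⟩, f, hf, haf⟩ := hcon
  obtain ⟨u, hu, huN, p, hp, p', hp', hpp, hup, hup'⟩ := hF.prime.exists_split
    (N := {x | x ∈ F ∧ G.Adj a x}) (fun x hx => hx.1)
    (fun h => haf (h.symm ▸ hf : f ∈ {x | x ∈ F ∧ G.Adj a x}).2) ⟨hq, haq⟩ ⟨hr, har⟩ hqr
  have hau : ¬ G.Adj a u := fun h => huN ⟨hu, h⟩
  exact hb.no_bull hp.2.symm hpp hp'.2 hup.symm hab (fun h => hbF p hp.1 h.symm) hau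
    (fun h => hup' h.symm) (fun h => hbF p' hp'.1 h.symm) (fun h => hbF u hu h.symm)

/-- A vertex complete to the core is adjacent to every vertex with a nonempty stable neighbourhood
in the core: otherwise the non-neighbours of the latter in the core would form a clique, and its
neighbours in the core would be simplicial. -/
lemma Core.complete_adj_stable (hF : Core G F) (hb : IsFree G bull) {s x f : V}
    (hs : StableNbrs G F s) (hf : f ∈ F) (hsf : G.Adj s f) (hx : ∀ f ∈ F, G.Adj x f) :
    G.Adj x s := by
  by_contra hxs
  have hY : ∀ q ∈ F, ∀ r ∈ F, ¬ G.Adj s q → ¬ G.Adj s r → q ≠ r → G.Adj q r := by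
    intro q hq r hr hsq hsr hqr
    by_contra hnqr
    obtain ⟨u, hu, huN, a, ha, b, hb', hab, hua, hub⟩ := hF.prime.compl.exists_split
      (N := {x | x ∈ F ∧ ¬ G.Adj s x}) (fun x hx => hx.1)
      (fun h => (h.symm ▸ hf : f ∈ {x | x ∈ F ∧ ¬ G.Adj s x}).2 hsf) (q := q) (r := r)
      ⟨hq, hsq⟩ ⟨hr, hsr⟩ ⟨hqr, hnqr⟩
    have hus : G.Adj s u := by
      by_contra h
      exact huN ⟨hu, h⟩
    have hub' : G.Adj u b := by
      by_contra h
      exact hub ⟨fun h' => huN (h' ▸ hb'), h⟩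
    exact hb.no_bull (hx u hu).symm hub' (hx b hb'.1) hus.symm (hx a ha.1) hua.2 hxs
      (fun h => hb'.2 h.symm) (fun h => hab.2 h.symm) ha.2
  obtain ⟨p, hp, q, hq, hfp, hfq, hpq, hnpq⟩ := hF.nonsimplicial f hf
  exact hnpq (hY p hp q hq (fun h => hs f hf p hp hsf h hfp) (fun h => hs f hf q hq hsf h hfq) hpq)

lemma Core.complete_adj_outer (hF : Core G F) (hb : IsFree G bull) {s b x f : V}
    (hs : StableNbrs G F s) (hf : f ∈ F) (hsf : G.Adj s f) (hbF : ∀ f ∈ F, ¬ G.Adj b f)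
    (hsb : G.Adj s b) (hx : ∀ f ∈ F, G.Adj x f) : G.Adj x b := by
  by_contra hxb
  have hxs := hF.complete_adj_stable hb hs hf hsf hx
  obtain ⟨f', hf', hsf'⟩ := hF.exists_not_adj hs
  obtain ⟨u, hu, huN, p, hp, hup⟩ := hF.anticonnected (Z := {x | x ∈ F ∧ G.Adj s x})
    (fun x hx => hx.1) (fun h => hsf' (h.symm ▸ hf' : f' ∈ {x | x ∈ F ∧ G.Adj s x}).2)
    ⟨f, hf, hsf⟩
  exact hb.no_bull hxs.symm hp.2 (hx p hp.1) hsb (hx u hu) (fun h => huN ⟨hu, h⟩) hxb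
    (fun h => hbF p hp.1 h.symm) (fun h => hup h.symm) (hbF u hu)

lemma Core.complete_adj_mixed (hF : Core G F) (hb : IsFree G bull) {a b s f f' : V}
    (ha : ∀ f ∈ F, G.Adj a f) (hab : G.Adj a b) (hbF : ∀ f ∈ F, ¬ G.Adj b f) (hsb : ¬ G.Adj s b)
    (hf : f ∈ F) (hsf : G.Adj s f) (hf' : f' ∈ F) (hsf' : ¬ G.Adj s f') : G.Adj a s := by
  by_contra has
  obtain ⟨u, hu, huN, p, hp, hup⟩ := hF.connected (Z := {x | x ∈ F ∧ G.Adj s x})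
    (fun x hx => hx.1) (fun h => hsf' (h.symm ▸ hf' : f' ∈ {x | x ∈ F ∧ G.Adj s x}).2)
    ⟨f, hf, hsf⟩
  exact hb.no_bull (ha p hp.1).symm hup.symm (ha u hu) hp.2.symm hab
    (fun h => hbF p hp.1 h.symm) has (fun h => huN ⟨hu, h.symm⟩) (fun h => hbF u hu h.symm) hsb

/-- Some vertex with both a neighbour and a non-neighbour in the core has a neighbour `b` outside
the core and anticomplete to it. Otherwise let `B` be the set of all vertices outside `F`
anticomplete to `F`, and `A` the set of vertices complete to `F` with a neighbour in `B`; then the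
vertices outside `B` that are complete to `A` form a homogeneous set. -/
lemma Core.exists_attachment (hF : Core G F) (hb : IsFree G bull) (hV : PrimeOn G Set.univ) {v : V}
    (hvF : v ∉ F) (hv : ∀ f ∈ F, ¬ G.Adj v f) :
    ∃ s b, b ∉ F ∧ (∀ f ∈ F, ¬ G.Adj b f) ∧ G.Adj s b ∧ (∃ f ∈ F, G.Adj s f) ∧
      ∃ f ∈ F, ¬ G.Adj s f := by
  by_contra hcon
  have hno : ∀ s b, b ∉ F → (∀ f ∈ F, ¬ G.Adj b f) → G.Adj s b → ∀ f ∈ F, G.Adj s f →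
      ∀ f' ∈ F, G.Adj s f' := by
    intro s b hb1 hb2 hsb f hf hsf f' hf'
    by_contra h
    exact hcon ⟨s, b, hb1, hb2, hsb, ⟨f, hf, hsf⟩, f', hf', h⟩
  set A : Set V := {a | (∀ f ∈ F, G.Adj a f) ∧ ∃ b, b ∉ F ∧ (∀ f ∈ F, ¬ G.Adj b f) ∧ G.Adj a b}
    with hA
  set X : Set V := {x | (x ∉ F → ∃ f ∈ F, G.Adj x f) ∧ ∀ a ∈ A, G.Adj a x} with hX
  have hFX : F ⊆ X := fun f hf => ⟨fun h => absurd hf h, fun a ha => ha.1 f hf⟩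
  have hnb : ∀ x ∈ X, ∀ b, b ∉ F → (∀ f ∈ F, ¬ G.Adj b f) → ¬ G.Adj x b := by
    intro x hx b hb1 hb2 hxb
    by_cases hxF : x ∈ F
    · exact hb2 x hxF hxb.symm
    · obtain ⟨f, hf, hxf⟩ := hx.1 hxF
      exact (hx.2 x ⟨hno x b hb1 hb2 hxb f hf hxf, b, hb1, hb2, hxb⟩).ne rfl
  obtain ⟨u, -, huX, p, hp, q, hq, hup, huq⟩ := hV X (Set.subset_univ _)
    (fun h => by
      obtain ⟨f, hf, hvf⟩ := (h.symm ▸ trivial : v ∈ X).1 hvF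
      exact hv f hf hvf) (hF.nontrivial.mono hFX)
  have huF : u ∉ F := fun h => huX (hFX h)
  by_cases huB : ∃ f ∈ F, G.Adj u f
  · obtain ⟨f, hf, huf⟩ := huB
    have : ∃ a ∈ A, ¬ G.Adj a u := by
      by_contra h
      push Not at h
      exact huX ⟨fun _ => ⟨f, hf, huf⟩, h⟩
    obtain ⟨a, ha, hau⟩ := this
    obtain ⟨haF, b, hb1, hb2, hab⟩ := ha
    have huA : u ∉ A := fun h => huq (hq.2 u h)
    have hub : ¬ G.Adj u b := fun h =>
      huA ⟨hno u b hb1 hb2 h f hf huf, b, hb1, hb2, h⟩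
    have hucomp : ∀ f ∈ F, G.Adj u f := by
      by_contra h
      push Not at h
      obtain ⟨f', hf', huf'⟩ := h
      exact hau (hF.complete_adj_mixed hb haF hab hb2 hub hf huf hf' huf')
    have hqF : q ∉ F := fun h => huq (hucomp q h)
    obtain ⟨g, hg, hqg⟩ := hq.1 hqF
    exact hb.no_bull (haF g hg) (hq.2 a ⟨haF, b, hb1, hb2, hab⟩) hqg.symm hab (hucomp g hg).symm
      hau (fun h => hb2 g hg h.symm) (hnb q hq b hb1 hb2) (fun h => huq h.symm)
      (fun h => hub h.symm)
  · push Not at huB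
    exact hnb p hp u huF huB hup.symm

/-- `Reach G F n m`: there is a walk of length `n` from a vertex with a nonempty stable
neighbourhood in `F` to `m`, all of whose further vertices lie outside `F` and are anticomplete to `F`. -/
def Reach (G : SimpleGraph V) (F : Set V) : ℕ → V → Prop
  | 0, s => StableNbrs G F s ∧ ∃ f ∈ F, G.Adj s f
  | n + 1, b => (b ∉ F ∧ ∀ f ∈ F, ¬ G.Adj b f) ∧ ∃ m, Reach G F n m ∧ G.Adj m b

lemma Core.complete_adj_reach (hF : Core G F) (hb : IsFree G bull) {a : V}
    (ha : ∀ f ∈ F, G.Adj a f) (n : ℕ) : ∀ m, Reach G F n m → G.Adj a m := by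
  induction n using Nat.strong_induction_on with
  | _ n ih =>
    intro m hm
    match n, ih, hm with
    | 0, _, ⟨hs, f, hf, hmf⟩ => exact hF.complete_adj_stable hb hs hf hmf ha
    | 1, _, ⟨⟨_, hmF⟩, s, ⟨hs, f, hf, hsf⟩, hsm⟩ =>
      exact hF.complete_adj_outer hb hs hf hsf hmF hsm ha
    | n + 2, ih, ⟨⟨hm, hmF⟩, b, hR, hbm⟩ =>
      have hab := ih (n + 1) (by omega) b hR
      obtain ⟨⟨hbn, hbF⟩, c, hc, hcb⟩ := hR
      have hac := ih n (by omega) c hc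
      by_contra ham
      have hcm : ¬ G.Adj c m := fun h => ham (ih (n + 1) (by omega) m ⟨⟨hm, hmF⟩, c, hc, h⟩)
      obtain ⟨f, hf, hcf⟩ : ∃ f ∈ F, ¬ G.Adj c f := by
        match n, hc with
        | 0, hc => exact hF.exists_not_adj hc.1
        | n + 1, hc =>
          obtain ⟨f, hf⟩ := hF.nonempty
          exact ⟨f, hf, hc.1.2 f hf⟩
      exact hb.no_bull hab.symm hcb.symm hac hbm (ha f hf) (hbF f hf) ham hcm hcf (hmF f hf)

/-- No vertex is complete to the core. Otherwise the vertices not complete to `F` that are in `F`,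
attached to `F`, or reached in the sense of `Reach` form a homogeneous set. -/
lemma Core.not_complete (hF : Core G F) (hb : IsFree G bull) (hV : PrimeOn G Set.univ) {v : V}
    (hvF : v ∉ F) (hv : ∀ f ∈ F, ¬ G.Adj v f) (x : V) : ∃ f ∈ F, ¬ G.Adj x f := by
  by_contra hx
  push Not at hx
  obtain ⟨s, b, hbn, hbF, hsb, ⟨f, hf, hsf⟩, f', hf', hsf'⟩ := hF.exists_attachment hb hV hvF hv
  have hstab : ∀ s b, (∀ f ∈ F, ¬ G.Adj b f) → G.Adj s b → (∃ f ∈ F, ¬ G.Adj s f) →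
      StableNbrs G F s := by
    rintro s b hbF hsb ⟨f, hf, hsf⟩
    exact (hF.stable_or_complete hb hbF hsb).resolve_right fun h => hsf (h f hf)
  have hs := hstab s b hbF hsb ⟨f', hf', hsf'⟩
  set H : Set V := {h | (∃ f ∈ F, ¬ G.Adj h f) ∧
    (h ∈ F ∨ (∃ f ∈ F, G.Adj h f) ∨ ∃ n, Reach G F n h)} with hH
  have hFH : F ⊆ H := fun f hf => ⟨⟨f, hf, fun h => h.ne rfl⟩, Or.inl hf⟩
  obtain ⟨u, -, huH, p, hp, q, hq, hup, huq⟩ := hV H (Set.subset_univ _) (fun h => by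
    obtain ⟨f, hf, hxf⟩ := (h.symm ▸ trivial : x ∈ H).1
    exact hxf (hx f hf)) (hF.nontrivial.mono hFH)
  by_cases hu : ∀ f ∈ F, G.Adj u f
  · obtain ⟨⟨g', hg', hqg'⟩, hqF | ⟨g, hg, hqg⟩ | ⟨n, hn⟩⟩ := hq
    · exact huq (hu q hqF)
    · have hub := hF.complete_adj_outer hb hs hf hsf hbF hsb hu
      by_cases hqb : G.Adj q b
      · exact huq (hF.complete_adj_stable hb (hstab q b hbF hqb ⟨g', hg', hqg'⟩) hg hqg hu)
      · exact huq (hF.complete_adj_mixed hb hu hub hbF hqb hg hqg hg' hqg')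
    · exact huq (hF.complete_adj_reach hb hu n q hn)
  · push Not at hu
    have huF : u ∉ F := fun h => huH (hFH h)
    have huB : ∀ f ∈ F, ¬ G.Adj u f := fun f hf h => huH ⟨hu, Or.inr (Or.inl ⟨f, hf, h⟩)⟩
    obtain ⟨hpF, hp | hp | ⟨n, hn⟩⟩ := hp
    · exact huB p hp hup
    · exact huH ⟨hu, Or.inr (Or.inr ⟨1, ⟨huF, huB⟩, p, ⟨hstab p u huB hup.symm hpF, hp⟩,
        hup.symm⟩)⟩
    · exact huH ⟨hu, Or.inr (Or.inr ⟨n + 1, ⟨huF, huB⟩, p, hn, hup.symm⟩)⟩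

/-- A vertex with a neighbour anticomplete to the core has a stable neighbourhood in the core. -/
lemma Core.stableNbrs (hF : Core G F) (hb : IsFree G bull) (hV : PrimeOn G Set.univ) {v : V}
    (hvF : v ∉ F) (hv : ∀ f ∈ F, ¬ G.Adj v f) {a b : V} (hbF : ∀ f ∈ F, ¬ G.Adj b f)
    (hab : G.Adj a b) : StableNbrs G F a := by
  obtain ⟨f, hf, haf⟩ := hF.not_complete hb hV hvF hv a
  exact (hF.stable_or_complete hb hbF hab).resolve_right fun h => haf (h f hf)

end Attachments

/-! ### The hammer -/

section Hammer

variable {V : Type*} {G : SimpleGraph V} {F : Set V}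

/-- The vertices outside `F` without neighbours in `F`. -/
def outer (G : SimpleGraph V) (F : Set V) : Set V := {b | b ∉ F ∧ ∀ f ∈ F, ¬ G.Adj b f}

/-- In a triangle `v u t` with `v` outside the core and anticomplete to it, `u` has no neighbour
in the core. -/
lemma Core.outer_triangle (hF : Core G F) (hb : IsFree G bull) (hh : IsFree G hammer)
    (hV : PrimeOn G Set.univ) {v u t : V} (hv : v ∈ outer G F)
    (hvu : G.Adj v u) (hvt : G.Adj v t) (hut : G.Adj u t) {f : V} (hf : f ∈ F)
    (huf : G.Adj u f) : False := by
  have hsu := hF.stableNbrs hb hV hv.1 hv.2 hv.2 hvu.symm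
  have hst := hF.stableNbrs hb hV hv.1 hv.2 hv.2 hvt.symm
  -- `u` and `t` have the same neighbours in `F`: the vertices of `F` adjacent to exactly one of
  -- them form a union of components of `F`, and `F` itself would be bipartite.
  have hsame : ∀ c ∈ F, (G.Adj u c ↔ G.Adj t c) := by
    intro c hc
    by_contra hne
    set Z : Set V := {x | x ∈ F ∧ ¬ (G.Adj u x ↔ G.Adj t x)} with hZ
    by_cases hZF : Z = F
    · obtain ⟨x, hx, hux, y, hy, huy, hxy⟩ := hF.nonbipartite {x | G.Adj u x}
        (fun x hx h y hy h' => hsu x hx y hy h h')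
      have hall : ∀ z ∈ F, ¬ G.Adj u z → G.Adj t z := by
        intro z hz huz
        by_contra htz
        exact (hZF.symm ▸ hz : z ∈ Z).2 ⟨fun h => absurd h huz, fun h => absurd h htz⟩
      exact hst x hx y hy (hall x hx hux) (hall y hy huy) hxy
    · obtain ⟨w, hw, hwZ, p, ⟨hp, hup⟩, hwp⟩ :=
        hF.connected (Z := Z) (fun x hx => hx.1) hZF ⟨c, hc, hne⟩
      have hwiff : G.Adj u w ↔ G.Adj t w := by
        by_contra h
        exact hwZ ⟨hw, h⟩
      by_cases h1 : G.Adj u p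
      · have htp : ¬ G.Adj t p := fun h => hup ⟨fun _ => h, fun _ => h1⟩
        have huw : ¬ G.Adj u w := fun h => hsu w hw p hp h h1 hwp
        exact hh.no_hammer hvt hvu hut.symm h1 hwp.symm (hv.2 p hp) htp (hv.2 w hw)
          (fun h => huw (hwiff.2 h)) huw
      · have htp : G.Adj t p := by
          by_contra h
          exact hup ⟨fun h' => absurd h' h1, fun h' => absurd h' h⟩
        have htw : ¬ G.Adj t w := fun h => hst w hw p hp h htp hwp
        exact hh.no_hammer hvu hvt hut htp hwp.symm (hv.2 p hp) h1 (hv.2 w hw)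
          (fun h => htw (hwiff.1 h)) htw
  obtain ⟨x, hx, hux, y, hy, huy, hxy⟩ := hF.nonbipartite {x | G.Adj u x}
    (fun x hx h y hy h' => hsu x hx y hy h h')
  obtain ⟨w, hw, hwN, a, ha, b, hb', hab, hwa, hwb⟩ := hF.prime.exists_split
    (N := {x | x ∈ F ∧ ¬ G.Adj u x}) (fun x hx => hx.1)
    (fun h => (h.symm ▸ hf : f ∈ {x | x ∈ F ∧ ¬ G.Adj u x}).2 huf) ⟨hx, hux⟩ ⟨hy, huy⟩ hxy
  have huw : G.Adj u w := by
    by_contra h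
    exact hwN ⟨hw, h⟩
  exact hh.no_hammer hut huw ((hsame w hw).1 huw) hwa hab ha.2
    (fun h => ha.2 ((hsame a ha.1).2 h)) hb'.2 (fun h => hb'.2 ((hsame b hb'.1).2 h)) hwb

/-- The triangles anticomplete to the core, together with their neighbours, would form a union of
components of `G`. -/
lemma Core.no_triangle_of_hammer (hF : Core G F) (hb : IsFree G bull) (hh : IsFree G hammer)
    (hV : PrimeOn G Set.univ) {v u t : V} (hv : v ∈ outer G F)
    (hvu : G.Adj v u) (hvt : G.Adj v t) (hut : G.Adj u t) : False := by
  have htri : ∀ x y z, x ∈ outer G F → G.Adj x y → G.Adj x z → G.Adj y z → y ∈ outer G F := by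
    intro x y z hx hxy hxz hyz
    refine ⟨fun h => hx.2 y h hxy, fun f hf hyf => ?_⟩
    exact hF.outer_triangle hb hh hV hx hxy hxz hyz hf hyf
  set R : Set V := {r | r ∈ outer G F ∧ ∃ x y, G.Adj r x ∧ G.Adj r y ∧ G.Adj x y} with hR
  have hRout : ∀ r ∈ R, ∀ w, G.Adj w r → w ∈ outer G F := by
    rintro r ⟨hr, x, y, hrx, hry, hxy⟩ w hwr
    refine ⟨fun h => hr.2 w h hwr.symm, fun f hf hwf => ?_⟩
    have hx := htri r x y hr hrx hry hxy
    have hy := htri r y x hr hry hrx hxy.symm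
    have hnot : ∀ z, G.Adj r z → ¬ G.Adj z w := fun z hrz hzw =>
      (htri r w z hr hwr.symm hrz hzw.symm).2 f hf hwf
    exact hh.no_hammer hxy hrx.symm hry.symm hwr.symm hwf (hnot x hrx) (hnot y hry)
      (hx.2 f hf) (hy.2 f hf) (hr.2 f hf)
  have hvR : v ∈ R := ⟨hv, u, t, hvu, hvt, hut⟩
  obtain ⟨f, hf⟩ := hF.nonempty
  obtain ⟨w, -, hwK, p, hp, hwp⟩ := hV.connected (Set.mem_univ v) (Set.mem_univ u)
    (Set.mem_univ t) hvu.ne hvt.ne hut.ne (Z := {k | k ∈ R ∨ ∃ r ∈ R, G.Adj k r})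
    (Set.subset_univ _) (fun h => by
      rcases (h.symm ▸ trivial : f ∈ {k | k ∈ R ∨ ∃ r ∈ R, G.Adj k r}) with hfR | ⟨r, hr, hfr⟩
      · exact hfR.1.1 hf
      · exact hr.1.2 f hf hfr.symm) ⟨v, Or.inl hvR⟩
  have hwR : ∀ r ∈ R, ¬ G.Adj w r := fun r hr h => hwK (Or.inr ⟨r, hr, h⟩)
  rcases hp with hp | ⟨r, hr, hpr⟩
  · exact hwR p hp hwp
  · by_cases hpR : p ∈ R
    · exact hwR p hpR hwp
    · have hr' := hr
      obtain ⟨hro, x, y, hrx, hry, hxy⟩ := hr'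
      have hpo := hRout r hr p hpr
      have hx : x ∈ R := ⟨htri r x y hro hrx hry hxy, r, y, hrx.symm, hxy, hry⟩
      have hy : y ∈ R := ⟨htri r y x hro hry hrx hxy.symm, r, x, hry.symm, hxy.symm, hrx⟩
      exact hh.no_hammer hxy hrx.symm hry.symm hpr.symm hwp.symm
        (fun h => hpR ⟨hpo, r, x, hpr, h.symm, hrx⟩) (fun h => hpR ⟨hpo, r, y, hpr, h.symm, hry⟩)
        (fun h => hwR x hx h.symm) (fun h => hwR y hy h.symm) (fun h => hwR r hr h.symm)

end Hammer

/-! ### The house -/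

section House

variable {V : Type*} {G : SimpleGraph V} {F : Set V}

/-- A triangle `p a b` with a neighbour `p'` of `p` and a neighbour `y` of `a`, without further
edges to the triangle, gives a bull or a house according to whether `p'` and `y` are adjacent. -/
lemma no_bull_house (hb : IsFree G bull) (hh : IsFree G house) {p a b p' y : V} (hpa : G.Adj p a)
    (hpb : G.Adj p b) (hab : G.Adj a b) (hpp : G.Adj p p') (hay : G.Adj a y) (hpy : ¬ G.Adj p y)
    (hby : ¬ G.Adj b y) (hap : ¬ G.Adj a p') (hbp : ¬ G.Adj b p') : False := by
  by_cases h : G.Adj p' y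
  · exact hh.no_house hpa.symm hpp h hay.symm hab.symm hpb.symm hap hpy hbp hby
  · exact hb.no_bull hpa hpb hab hpp hay hpy hap hbp hby h

/-- If a neighbour `p'` of `p` has no common neighbour with `p` in the prime set `X`, then the
neighbourhood of `p` in `X` is stable. -/
lemma PrimeOn.stableNbrs (hb : IsFree G bull) (hh : IsFree G house) {X : Set V} (hX : PrimeOn G X)
    {p p' : V} (hp : p ∈ X) (hpp : G.Adj p p') (hq : ∀ q ∈ X, G.Adj p q → ¬ G.Adj p' q) :
    StableNbrs G X p := by
  intro x hx y hy hpx hpy hxy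
  obtain ⟨u, hu, huN, a, ha, b, hb', hab, hua, hub⟩ := hX.exists_split
    (N := {q | q ∈ X ∧ G.Adj p q}) (fun x hx => hx.1)
    (fun h => (h.symm ▸ hp : p ∈ {q | q ∈ X ∧ G.Adj p q}).2.ne rfl) ⟨hx, hpx⟩ ⟨hy, hpy⟩ hxy
  exact no_bull_house hb hh ha.2 hb'.2 hab hpp hua.symm (fun h => huN ⟨hu, h⟩)
    (fun h => hub h.symm) (fun h => hq a ha.1 ha.2 h.symm) (fun h => hq b hb'.1 hb'.2 h.symm)

/-- In a prime set, a vertex with stable neighbourhood passes this property on to its neighbours,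
hence to the whole set by connectedness. -/
lemma PrimeOn.stableNbrs_all (hb : IsFree G bull) (hh : IsFree G house) {X : Set V}
    (hX : PrimeOn G X) (hconn : ∀ Z ⊆ X, Z ≠ X → Z.Nonempty → ∃ u ∈ X, u ∉ Z ∧ ∃ p ∈ Z, G.Adj u p)
    {p : V} (hp : p ∈ X) (hpX : StableNbrs G X p) : ∀ x ∈ X, StableNbrs G X x := by
  by_contra hcon
  push Not at hcon
  obtain ⟨x, hx, hxX⟩ := hcon
  obtain ⟨w, hw, hwN, q, hq, hwq⟩ := hconn {q | q ∈ X ∧ StableNbrs G X q} (fun x hx => hx.1)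
    (fun h => hxX (h.symm ▸ hx : x ∈ {q | q ∈ X ∧ StableNbrs G X q}).2) ⟨p, hp, hpX⟩
  exact hwN ⟨hw, hX.stableNbrs hb hh hw hwq fun z hz hwz hqz =>
    hq.2 w hw z hz hwq.symm hqz hwz⟩

/-- Let `φ` embed the triangle-free core `F` into `G`. The neighbourhood of a vertex `y` in the
image is everything, or stable, or a closed neighbourhood `N[r]`. -/
lemma Core.trace (hF : Core G F) (hb : IsFree G bull) (hh : IsFree G house)
    (htf : ∀ p ∈ F, StableNbrs G F p) {φ : V → V}
    (hφ : ∀ k ∈ F, ∀ j ∈ F, (G.Adj (φ k) (φ j) ↔ G.Adj k j)) (y : V) :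
    (∀ k ∈ F, G.Adj y (φ k)) ∨
    (∀ k ∈ F, ∀ j ∈ F, G.Adj y (φ k) → G.Adj y (φ j) → ¬ G.Adj k j) ∨
    ∃ r ∈ F, ∀ k ∈ F, (G.Adj y (φ k) ↔ k = r ∨ G.Adj r k) := by
  by_contra hcon
  push Not at hcon
  obtain ⟨⟨f, hf, hyf⟩, ⟨k, hk, j, hj, hyk, hyj, hkj⟩, hcl⟩ := hcon
  set N : Set V := {k | k ∈ F ∧ G.Adj y (φ k)} with hN
  obtain ⟨u, hu, huN, q, hq, r, hr, hqr, huq, hur⟩ := hF.prime.exists_split (N := N)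
    (fun x hx => hx.1) (fun h => hyf (h.symm ▸ hf : f ∈ N).2) ⟨hk, hyk⟩ ⟨hj, hyj⟩ hkj
  have hyu : ¬ G.Adj y (φ u) := fun h => huN ⟨hu, h⟩
  have hnot : ∀ k ∈ F, ∀ j ∈ F, ¬ G.Adj k j → ¬ G.Adj (φ k) (φ j) := fun k hk j hj h h' =>
    h ((hφ k hk j hj).1 h')
  have hcov : ∀ r ∈ N, G.Adj q r → ∀ p ∈ N, G.Adj q p ∨ G.Adj r p := by
    intro r hr hqr p hp
    by_contra h
    push Not at h
    exact no_bull_house hb hh hq.2 hr.2 ((hφ q hq.1 r hr.1).2 hqr) hp.2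
      ((hφ q hq.1 u hu).2 huq.symm) hyu
      (hnot r hr.1 u hu fun h' => htf q hq.1 r hr.1 u hu hqr huq.symm h')
      (hnot q hq.1 p hp.1 h.1) (hnot r hr.1 p hp.1 h.2)
  have hclosed : ∀ r ∈ N, G.Adj q r → ∀ z ∈ F, G.Adj r z → z ∈ N := by
    intro r hr hqr z hz hrz
    by_contra hzN
    exact no_bull_house hb hh ((hφ q hq.1 r hr.1).2 hqr) hq.2.symm hr.2.symm
      ((hφ q hq.1 u hu).2 huq.symm) ((hφ r hr.1 z hz).2 hrz)
      (hnot q hq.1 z hz fun h => htf q hq.1 r hr.1 z hz hqr h hrz) (fun h => hzN ⟨hz, h⟩)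
      (hnot r hr.1 u hu fun h => htf q hq.1 r hr.1 u hu hqr huq.symm h) hyu
  have huniq : ∀ p ∈ N, G.Adj q p → p = r := by
    intro p hp hqp
    by_contra hpr
    obtain ⟨j, hj, hjP, z, hz, z', hz', hjz, hjz'⟩ := hF.prime {p | p ∈ N ∧ G.Adj q p}
      (fun x hx => hx.1.1)
      (fun h => (h.symm ▸ hq.1 : q ∈ {p | p ∈ N ∧ G.Adj q p}).2.ne rfl)
      ⟨p, ⟨hp, hqp⟩, r, ⟨hr, hqr⟩, hpr⟩
    have hjN := hclosed z hz.1 hz.2 j hj hjz.symm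
    rcases hcov z' hz'.1 hz'.2 j hjN with h | h
    · exact hjP ⟨hjN, h⟩
    · exact hjz' h.symm
  obtain ⟨k, hk, h | h⟩ := hcl r hr.1
  · rcases hcov r hr hqr k ⟨hk, h.1⟩ with h' | h'
    · exact h.2.1 (huniq k ⟨hk, h.1⟩ h')
    · exact h.2.2 h'
  · rcases h.2 with rfl | hrk
    · exact h.1 hr.2
    · exact h.1 (hclosed r hr hqr k hk hrk).2

/-- No vertex is a true twin of `r ∈ F` over the core `F`. Otherwise the vertices agreeing with `r`
on `F \ {r}` span an edge; a vertex `u` splitting such an edge `r₁ r₂` is compared with the two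
copies of `F` in which `r` is replaced by `r₁` and by `r₂`. -/
lemma Core.no_true_twin (hF : Core G F) (hb : IsFree G bull) (hh : IsFree G house)
    (hV : PrimeOn G Set.univ) (htf : ∀ p ∈ F, StableNbrs G F p) {r y : V} (hr : r ∈ F)
    (hyr : G.Adj y r) (hy : ∀ k ∈ F, k ≠ r → (G.Adj y k ↔ G.Adj r k)) : False := by
  classical
  set N : Set V := {y | ∀ k ∈ F, k ≠ r → (G.Adj y k ↔ G.Adj r k)} with hN
  have hext : ∀ z ∈ F, G.Adj r z → ∃ w ∈ F, G.Adj z w ∧ w ≠ r ∧ ¬ G.Adj r w := by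
    intro z hz hrz
    obtain ⟨a, ha, b, hb, hza, hzb, hab, -⟩ := hF.nonsimplicial z hz
    by_cases har : a = r
    · exact ⟨b, hb, hzb, fun h => hab (har.trans h.symm),
        fun h => htf r hr z hz b hb hrz h hzb⟩
    · exact ⟨a, ha, hza, har, fun h => htf r hr z hz a ha hrz h hza⟩
  obtain ⟨z₁, hz₁, z₂, hz₂, hrz₁, hrz₂, hz₁₂, -⟩ := hF.nonsimplicial r hr
  obtain ⟨u, -, huN, r₁, hr₁, r₂, hr₂, hr₁₂, hur₁, hur₂⟩ := hV.exists_split (N := N)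
    (Set.subset_univ _) (fun h => by
      obtain ⟨w, hw, hzw, hwr, hrw⟩ := hext z₁ hz₁ hrz₁
      exact hrw (((h.symm ▸ trivial : z₁ ∈ N) w hw hwr).1 hzw)) (q := y) (r := r) hy
    (fun k _ _ => Iff.rfl) hyr
  have huz : ∀ z ∈ F, G.Adj r z → G.Adj u z := by
    intro z hz hrz
    by_contra huz
    obtain ⟨w, hw, hzw, hwr, hrw⟩ := hext z hz hrz
    exact no_bull_house hb hh ((hr₁ z hz hrz.ne').2 hrz) hr₁₂ ((hr₂ z hz hrz.ne').2 hrz).symm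
      hur₁.symm hzw (fun h => hrw ((hr₁ w hw hwr).1 h)) (fun h => hrw ((hr₂ w hw hwr).1 h))
      (fun h => huz h.symm) (fun h => hur₂ h.symm)
  have hφ : ∀ r' ∈ N, ∀ k ∈ F, ∀ j ∈ F,
      (G.Adj (Function.update id r r' k) (Function.update id r r' j) ↔ G.Adj k j) := by
    intro r' hr' k hk j hj
    by_cases hkr : k = r <;> by_cases hjr : j = r
    · simp [hkr, hjr]
    · subst hkr
      simpa [hjr] using hr' j hj hjr
    · subst hjr
      simpa [hkr, G.adj_comm k] using hr' k hk hkr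
    · simp [hkr, hjr]
  have huk : ∀ k ∈ F, k ≠ r → G.Adj u k := by
    rcases hF.trace hb hh htf (hφ r₁ hr₁) u with h | h | ⟨ρ, hρ, h⟩
    · intro k hk hkr
      simpa [hkr] using h k hk
    · exact absurd hrz₁ (h r hr z₁ hz₁ (by simpa using hur₁)
        (by simpa [hrz₁.ne'] using huz z₁ hz₁ hrz₁))
    · exfalso
      by_cases hρr : ρ = r
      · subst hρr
        refine huN fun k hk hkr => ?_
        simpa [hkr] using h k hk
      · have hρa : G.Adj ρ r := ((h r hr).1 (by simpa using hur₁)).resolve_left (Ne.symm hρr)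
        obtain ⟨z, hz, hrz, hzρ⟩ : ∃ z ∈ F, G.Adj r z ∧ z ≠ ρ := by
          by_cases h1 : z₁ = ρ
          · exact ⟨z₂, hz₂, hrz₂, fun h2 => hz₁₂ (h1.trans h2.symm)⟩
          · exact ⟨z₁, hz₁, hrz₁, h1⟩
        have hρz : G.Adj ρ z :=
          ((h z hz).1 (by simpa [hrz.ne'] using huz z hz hrz)).resolve_left hzρ
        exact htf r hr ρ hρ z hz hρa.symm hrz hρz
  rcases hF.trace hb hh htf (hφ r₂ hr₂) u with h | h | ⟨ρ, hρ, h⟩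
  · exact hur₂ (by simpa using h r hr)
  · obtain ⟨w, hw, hzw, hwr, -⟩ := hext z₁ hz₁ hrz₁
    exact h z₁ hz₁ w hw (by simpa [hrz₁.ne'] using huk z₁ hz₁ hrz₁.ne')
      (by simpa [hwr] using huk w hw hwr) hzw
  · have hr' : ¬ (r = ρ ∨ G.Adj ρ r) := fun h' => hur₂ (by simpa using (h r hr).2 h')
    push Not at hr'
    have hρ' : ∀ k ∈ F, k ≠ r → k ≠ ρ → G.Adj ρ k := fun k hk hkr hkρ =>
      ((h k hk).1 (by simpa [hkr] using huk k hk hkr)).resolve_left hkρ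
    have hρz : ∀ z ∈ F, G.Adj r z → G.Adj ρ z := fun z hz hrz =>
      hρ' z hz hrz.ne' (by rintro rfl; exact hr'.2 hrz.symm)
    obtain ⟨j, hj, -, a, ha, b, hb', hja, hjb⟩ := hF.prime {z | z ∈ F ∧ G.Adj r z}
      (fun x hx => hx.1) (fun h => (h.symm ▸ hr : r ∈ {z | z ∈ F ∧ G.Adj r z}).2.ne rfl)
      ⟨z₁, ⟨hz₁, hrz₁⟩, z₂, ⟨hz₂, hrz₂⟩, hz₁₂⟩
    have hjr : j ≠ r := by rintro rfl; exact hjb hb'.2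
    have hjρ : j ≠ ρ := by rintro rfl; exact hjb (hρz b hb'.1 hb'.2)
    exact htf ρ hρ j hj a ha.1 (hρ' j hj hjr hjρ) (hρz a ha.1 ha.2) hja

lemma Core.no_triangle_of_house (hF : Core G F) (hb : IsFree G bull) (hh : IsFree G house)
    (hV : PrimeOn G Set.univ) {v : V} (hvF : v ∉ F) (hv : ∀ f ∈ F, ¬ G.Adj v f) {x y z : V}
    (hxy : G.Adj x y) (hxz : G.Adj x z) (hyz : G.Adj y z) : False := by
  obtain ⟨s, b, -, hbF, hsb, ⟨f, hf, hsf⟩, -⟩ := hF.exists_attachment hb hV hvF hv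
  have hs := hF.stableNbrs hb hV hvF hv hbF hsb
  have htf : ∀ p ∈ F, StableNbrs G F p :=
    hF.prime.stableNbrs_all hb hh (fun Z => hF.connected) hf
      (hF.prime.stableNbrs hb hh hf hsf.symm fun q hq hfq hsq => hs f hf q hq hsf hsq hfq)
  -- No edge of the core lies in a triangle of `G`.
  have hedge : ∀ p ∈ F, ∀ q ∈ F, G.Adj p q → ∀ t, G.Adj p t → ¬ G.Adj q t := by
    intro p hp q hq hpq t hpt hqt
    rcases hF.trace hb hh htf (φ := id) (fun _ _ _ _ => Iff.rfl) t with h | h | ⟨r, hr, h⟩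
    · obtain ⟨g, hg, htg⟩ := hF.not_complete hb hV hvF hv t
      exact htg (h g hg)
    · exact h p hp q hq hpt.symm hqt.symm hpq
    · exact hF.no_true_twin hb hh hV htf hr ((h r hr).2 (Or.inl rfl)) fun k hk hkr =>
        (h k hk).trans (or_iff_right hkr)
  obtain ⟨p, hp, q, hq, hpq⟩ := hF.exists_edge
  exact hV.stableNbrs_all hb hh
    (fun Z => hV.connected (Set.mem_univ x) (Set.mem_univ y) (Set.mem_univ z) hxy.ne hxz.ne hyz.ne)
    (Set.mem_univ p) (hV.stableNbrs hb hh (Set.mem_univ p) hpq fun t _ => hedge p hp q hq hpq t)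
    x (Set.mem_univ x) y (Set.mem_univ y) z (Set.mem_univ z) hxy hxz hyz

end House

lemma containsInduced_cycleGraph_three {V : Type*} {G : SimpleGraph V}
    (h : ContainsInduced G (SimpleGraph.cycleGraph 3)) :
    ∃ x y z, G.Adj x y ∧ G.Adj x z ∧ G.Adj y z := by
  obtain ⟨f, hf⟩ := h
  refine ⟨f 0, f 1, f 2, ?_, ?_, ?_⟩ <;>
  · rw [hf]
    decide

/-- For `H` one of house, hammer, every (bull, H)-free minimally non-perfectly weight
divisible graph is triangle-free. -/
theorem bull_H_free_MNWD_triangleFree {V : Type*} [Fintype V] (G : SimpleGraph V)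
    (hbull : IsFree G bull) (hH : IsFree G house ∨ IsFree G hammer) (hmnwd : MNWD G) :
    IsFree G (SimpleGraph.cycleGraph 3) := by
  intro h
  obtain ⟨x, y, z, hxy, hxz, hyz⟩ := containsInduced_cycleGraph_three h
  obtain ⟨F, hFA, hF⟩ := exists_core (hmnwd.not_perf_nonNbrs x)
  have hxF : x ∉ F := fun hx => (hFA hx).1 rfl
  rcases hH with hh | hh
  · exact hF.no_triangle_of_house hbull hh hmnwd.primeOn hxF (fun f hf => (hFA hf).2) hxy hxz hyz
  · exact hF.no_triangle_of_hammer hbull hh hmnwd.primeOn ⟨hxF, fun f hf => (hFA hf).2⟩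
      hxy hxz hyz
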